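/- arXiv:1208.5631 — 2 statements merged into one kernel-verified Lean document; each statement's English description precedes it below -/
import Mathlib

section
/- The cardinal characteristics 𝔭 and 𝔱 are equal: the pseudo-intersection number equals the tower number. -/
open Cardinal

/-- `A ⊆* B`: almost inclusion, `A \ B` is finite. -/
def AlmostSubset (A B : Set ℕ) : Prop := (A \ B).Finite

/-- Strong finite intersection property: every finite subfamily has infinite intersection. -/
def SFIP (F : Set (Set ℕ)) : Prop :=
  ∀ S : Finset (Set ℕ), ↑S ⊆ F → (⋂₀ (↑S : Set (Set ℕ))).Infinite

/-- The family `F` has an infinite pseudo-intersection. -/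
def HasPseudoIntersection (F : Set (Set ℕ)) : Prop :=
  ∃ A : Set ℕ, A.Infinite ∧ ∀ B ∈ F, AlmostSubset A B

/-- A tower: a family of infinite sets linearly preordered by almost inclusion. -/
def IsTower (F : Set (Set ℕ)) : Prop :=
  (∀ B ∈ F, Set.Infinite B) ∧
  ∀ A ∈ F, ∀ B ∈ F, AlmostSubset A B ∨ AlmostSubset B A

/-- The pseudo-intersection number 𝔭. -/
noncomputable def pseudoIntersectionNumber : Cardinal :=
  sInf { c : Cardinal | ∃ F : Set (Set ℕ), #F = c ∧ (∀ B ∈ F, Set.Infinite B) ∧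
    SFIP F ∧ ¬ HasPseudoIntersection F }

/-- The tower number 𝔱. -/
noncomputable def towerNumber : Cardinal :=
  sInf { c : Cardinal | ∃ F : Set (Set ℕ), #F = c ∧ IsTower F ∧ ¬ HasPseudoIntersection F }


open Filter Set

namespace PseudoIntersection

/-- The filter of statements true at all but finitely many elements of `A`. -/
def almostAll (A : Set ℕ) : Filter ℕ := cofinite ⊓ 𝓟 A

theorem eventually_almostAll {A : Set ℕ} {P : ℕ → Prop} :
    (∀ᶠ n in almostAll A, P n) ↔ {n ∈ A | ¬ P n}.Finite := by
  rw [almostAll, eventually_inf_principal, eventually_cofinite]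
  simp only [Classical.not_imp]

theorem eventually_mem_almostAll (A : Set ℕ) : ∀ᶠ n in almostAll A, n ∈ A :=
  eventually_inf_principal.2 (Eventually.of_forall fun _ h => h)

theorem neBot_almostAll {A : Set ℕ} (hA : A.Infinite) : (almostAll A).NeBot :=
  cofinite_inf_principal_neBot_iff.2 hA

theorem eventually_almostAll_ge (A : Set ℕ) (m : ℕ) : ∀ᶠ n in almostAll A, m ≤ n := by
  have h : ∀ᶠ n in (cofinite : Filter ℕ), m ≤ n := by
    rw [Nat.cofinite_eq_atTop]
    exact eventually_ge_atTop m
  exact h.filter_mono inf_le_left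

theorem almostSubset_iff {A B : Set ℕ} : AlmostSubset A B ↔ ∀ᶠ n in almostAll A, n ∈ B := by
  rw [eventually_almostAll]
  rfl

theorem almostAll_mono {A B : Set ℕ} (h : AlmostSubset A B) :
    almostAll A ≤ almostAll B :=
  le_inf inf_le_left (le_principal_iff.2 (almostSubset_iff.1 h))

theorem almostSubset_of_subset {A B : Set ℕ} (h : A ⊆ B) : AlmostSubset A B := by
  rw [AlmostSubset, sdiff_eq_empty.2 h]
  exact finite_empty

theorem almostSubset_trans {A B C : Set ℕ} (h : AlmostSubset A B) (h' : AlmostSubset B C) :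
    AlmostSubset A C :=
  almostSubset_iff.2 ((almostSubset_iff.1 h').filter_mono (almostAll_mono h))

/-- Transfinite recursion for sequences constrained by a unary and a binary relation. -/
theorem exists_transfinite_sequence {I X : Type*} [LinearOrder I] [WellFoundedLT I] [Nonempty X]
    (U : I → X → Prop) (R : I → I → X → X → Prop)
    (step : ∀ α (f : I → X), (∀ γ < α, U γ (f γ)) →
      (∀ γ < α, ∀ β < γ, R β γ (f β) (f γ)) → ∃ x, U α x ∧ ∀ β < α, R β α (f β) x) :
    ∃ f : I → X, (∀ α, U α (f α)) ∧ ∀ α, ∀ β < α, R β α (f β) (f α) := by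
  classical
  let F : (α : I) → ((β : I) → β < α → X) → X := fun α ih =>
    if h : ∃ x, U α x ∧ ∀ β (hβ : β < α), R β α (ih β hβ) x then h.choose
    else Classical.arbitrary X
  let f : I → X := wellFounded_lt.fix F
  have hf : ∀ α, f α = F α fun β _ => f β := fun α => wellFounded_lt.fix_eq F α
  have key : ∀ α, U α (f α) ∧ ∀ β < α, R β α (f β) (f α) := by
    intro α
    induction α using WellFoundedLT.induction with
    | ind α ih =>
      have h := step α f (fun γ hγ => (ih γ hγ).1) fun γ hγ => (ih γ hγ).2
      rw [hf α]
      simp only [F]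
      rw [dif_pos h]
      exact h.choose_spec
  exact ⟨f, fun α => (key α).1, fun α => (key α).2⟩

/-- An infinite subset of a union of finite fibres has a section over an infinite set. -/
theorem exists_section {Z : Type*} [Nonempty Z] (D : Set (ℕ × Z)) (hD : D.Infinite)
    (hfin : ∀ n, {z | (n, z) ∈ D}.Finite) :
    ∃ (A : Set ℕ) (z : ℕ → Z), A.Infinite ∧ (∀ n ∈ A, (n, z n) ∈ D) ∧
      ∀ C : Set (ℕ × Z), (D \ C).Finite → ∀ᶠ n in almostAll A, (n, z n) ∈ C := by
  classical
  have hz : ∀ n, ∃ z, n ∈ Prod.fst '' D → (n, z) ∈ D := by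
    intro n
    by_cases h : n ∈ Prod.fst '' D
    · obtain ⟨⟨m, z⟩, hm, rfl⟩ := h
      exact ⟨z, fun _ => hm⟩
    · exact ⟨Classical.arbitrary Z, fun h' => absurd h' h⟩
  choose z hz using hz
  refine ⟨Prod.fst '' D, z, fun h => hD ?_, hz, fun C hC => ?_⟩
  · refine (h.biUnion fun n _ => (hfin n).image (Prod.mk n)).subset ?_
    rintro ⟨n, w⟩ hw
    exact mem_biUnion (mem_image_of_mem Prod.fst hw) ⟨w, hw, rfl⟩
  · rw [eventually_almostAll]
    refine (hC.image Prod.fst).subset ?_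
    rintro n ⟨hn, hn'⟩
    exact ⟨(n, z n), ⟨hz n hn, hn'⟩, rfl⟩

theorem countable_sigma_finite {Z : Type*} (S : ℕ → Set Z) (hS : ∀ n, (S n).Finite) :
    {q : ℕ × Z | q.2 ∈ S q.1}.Countable := by
  refine (countable_iUnion fun n => ((hS n).image (Prod.mk n)).countable).mono ?_
  rintro ⟨n, z⟩ hz
  exact mem_iUnion.2 ⟨n, z, hz, rfl⟩

/-- `HasPseudoIntersection` for families of subsets of an arbitrary countable set, deduced from
the case of `ℕ` for families obtained by transport along an injection. -/
theorem exists_pseudoIntersection_of_injOn {Q J : Type} (S : Set Q) (hS : S.Countable)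
    (C : J → Set Q) (hC : ∀ j, C j ⊆ S) (hSinf : S.Infinite)
    (H : ∀ e : Q → ℕ, InjOn e S → HasPseudoIntersection (range fun j => e '' C j)) :
    ∃ D ⊆ S, D.Infinite ∧ ∀ j, (D \ C j).Finite := by
  obtain ⟨e, he⟩ := countable_iff_exists_injOn.1 hS
  rcases isEmpty_or_nonempty J with hJ | ⟨⟨j₀⟩⟩
  · exact ⟨S, Subset.rfl, hSinf, fun j => hJ.elim j⟩
  obtain ⟨A, hA, hAC⟩ := H e he
  have hAC' : ∀ j, (A \ e '' C j).Finite := fun j => hAC _ ⟨j, rfl⟩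
  refine ⟨S ∩ e ⁻¹' A, inter_subset_left, fun h => hA ?_, fun j => ?_⟩
  · refine ((h.image e).union (hAC' j₀)).subset fun a ha => ?_
    by_cases h' : a ∈ e '' C j₀
    · obtain ⟨q, hq, rfl⟩ := h'
      exact Or.inl ⟨q, ⟨hC _ hq, ha⟩, rfl⟩
    · exact Or.inr ⟨ha, h'⟩
  · refine Finite.of_finite_image ((hAC' j).subset ?_)
      (he.mono (sdiff_subset.trans inter_subset_left))
    rintro _ ⟨q, ⟨⟨hqS, hqA⟩, hqC⟩, rfl⟩
    refine ⟨hqA, ?_⟩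
    rintro ⟨q', hq', heq⟩
    exact hqC (he (hC _ hq') hqS heq ▸ hq')

/-- Every family of fewer than `p` sets with the strong finite intersection property has a
pseudo-intersection. -/
def Saturated (p : Cardinal.{0}) : Prop :=
  ∀ F : Set (Set ℕ), SFIP F → #F < p → HasPseudoIntersection F

/-- Every tower of size at most `p` has a pseudo-intersection. -/
def TowersBounded (p : Cardinal.{0}) : Prop :=
  ∀ F : Set (Set ℕ), IsTower F → #F ≤ p → HasPseudoIntersection F

/-- Fewer than `p` finitely satisfiable requirements can be met simultaneously, almost everywhere on
an infinite set, by a section of a sequence of finite sets. -/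
theorem Saturated.exists_section {p : Cardinal.{0}} (hp : Saturated p) {J Z : Type} [Nonempty Z]
    (hJ : #J < p) (S : ℕ → Set Z) (hS : ∀ n, (S n).Finite) (P : J → ℕ → Z → Prop)
    (hP : ∀ T : Finset J, {n | ∃ z ∈ S n, ∀ j ∈ T, P j n z}.Infinite) :
    ∃ (A : Set ℕ) (z : ℕ → Z), A.Infinite ∧ (∀ n ∈ A, z n ∈ S n) ∧
      ∀ j, ∀ᶠ n in almostAll A, P j n (z n) := by
  classical
  let Q : Set (ℕ × Z) := {q | q.2 ∈ S q.1}
  let C : J → Set (ℕ × Z) := fun j => {q | q.2 ∈ S q.1 ∧ P j q.1 q.2}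
  have hT : ∀ T : Finset J, {q : ℕ × Z | q ∈ Q ∧ ∀ j ∈ T, q ∈ C j}.Infinite := by
    intro T h
    refine hP T ((h.image Prod.fst).subset ?_)
    rintro n ⟨z, hz, hzT⟩
    exact ⟨(n, z), ⟨hz, fun j hj => ⟨hz, hzT j hj⟩⟩, rfl⟩
  obtain ⟨D, hDQ, hD, hDC⟩ := exists_pseudoIntersection_of_injOn Q (countable_sigma_finite S hS) C
    (fun j q hq => hq.1) ((hT ∅).mono fun q hq => hq.1) (by
      intro e he
      refine hp _ ?_ (mk_range_le.trans_lt hJ)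
      intro F hF
      obtain ⟨T, -, hTF⟩ := Finset.subset_set_image_iff.1
        (show (F : Set (Set ℕ)) ⊆ (fun j => e '' C j) '' univ by rwa [image_univ])
      refine ((hT T).image (f := e) (he.mono fun q hq => hq.1)).mono ?_
      rintro _ ⟨q, hq, rfl⟩ B hB
      rw [← hTF] at hB
      obtain ⟨j, hj, rfl⟩ := Finset.mem_image.1 (Finset.mem_coe.1 hB)
      exact ⟨q, hq.2 j hj, rfl⟩)
  obtain ⟨A, z, hA, hz, hAz⟩ := PseudoIntersection.exists_section D hD
    fun n => (hS n).subset fun z hz => hDQ hz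
  exact ⟨A, z, hA, fun n hn => hDQ (hz n hn), fun j => (hAz _ (hDC j)).mono fun n hn => hn.2⟩

/-- An eventually decreasing sequence of at most `p` requirements can be met simultaneously, almost
everywhere on an infinite set, by a section of a sequence of finite sets. -/
theorem TowersBounded.exists_section {p : Cardinal.{0}} (hp : TowersBounded p) {J Z : Type}
    [LinearOrder J] [Nonempty J] [Nonempty Z] (hJ : #J ≤ p) (S : ℕ → Set Z)
    (hS : ∀ n, (S n).Finite) (P : J → ℕ → Z → Prop)
    (hmono : ∀ i j, i < j → {n | ∃ z ∈ S n, P j n z ∧ ¬ P i n z}.Finite)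
    (hinf : ∀ j, {n | ∃ z ∈ S n, P j n z}.Infinite) :
    ∃ (A : Set ℕ) (z : ℕ → Z), A.Infinite ∧ (∀ n ∈ A, z n ∈ S n) ∧
      ∀ j, ∀ᶠ n in almostAll A, P j n (z n) := by
  let Q : Set (ℕ × Z) := {q | q.2 ∈ S q.1}
  let C : J → Set (ℕ × Z) := fun j => {q | q.2 ∈ S q.1 ∧ P j q.1 q.2}
  have hCinf : ∀ j, (C j).Infinite := by
    intro j h
    refine hinf j ((h.image Prod.fst).subset ?_)
    rintro n ⟨z, hz, hzj⟩
    exact ⟨(n, z), ⟨hz, hzj⟩, rfl⟩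
  have hCmono : ∀ i j, i ≤ j → (C j \ C i).Finite := by
    intro i j hij
    rcases hij.eq_or_lt with rfl | hij
    · simp
    refine ((hmono i j hij).biUnion fun n _ => (hS n).image (Prod.mk n)).subset ?_
    rintro ⟨n, z⟩ ⟨⟨hz, hj⟩, hi⟩
    exact mem_biUnion (show n ∈ _ from ⟨z, hz, hj, fun h => hi ⟨hz, h⟩⟩) ⟨z, hz, rfl⟩
  obtain ⟨D, hDQ, hD, hDC⟩ := exists_pseudoIntersection_of_injOn Q (countable_sigma_finite S hS) C
    (fun j q hq => hq.1) ((hCinf (Classical.arbitrary J)).mono fun q hq => hq.1) (by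
      intro e he
      have hle : ∀ i j, i ≤ j → AlmostSubset (e '' C j) (e '' C i) := by
        intro i j hij
        refine ((hCmono i j hij).image e).subset ?_
        rintro _ ⟨⟨q, hq, rfl⟩, hq'⟩
        exact ⟨q, ⟨hq, fun h => hq' ⟨q, h, rfl⟩⟩, rfl⟩
      refine hp _ ⟨?_, ?_⟩ (mk_range_le.trans hJ)
      · rintro _ ⟨j, rfl⟩
        exact (hCinf j).image (he.mono fun q hq => hq.1)
      · rintro _ ⟨i, rfl⟩ _ ⟨j, rfl⟩
        exact (le_total j i).imp (hle j i) (hle i j))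
  obtain ⟨A, z, hA, hz, hAz⟩ := PseudoIntersection.exists_section D hD
    fun n => (hS n).subset fun z hz => hDQ hz
  exact ⟨A, z, hA, fun n hn => hDQ (hz n hn), fun j => (hAz _ (hDC j)).mono fun n hn => hn.2⟩

theorem TowersBounded.exists_almostSubset {p : Cardinal.{0}} (hp : TowersBounded p) {J : Type}
    [LinearOrder J] (hJ : #J ≤ p) (A : J → Set ℕ) (hA : ∀ j, (A j).Infinite)
    (hmono : ∀ j, ∀ i < j, AlmostSubset (A j) (A i)) :
    ∃ D : Set ℕ, D.Infinite ∧ ∀ j, AlmostSubset D (A j) := by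
  have htower : IsTower (range A) := by
    refine ⟨?_, ?_⟩
    · rintro _ ⟨j, rfl⟩
      exact hA j
    · rintro _ ⟨i, rfl⟩ _ ⟨j, rfl⟩
      rcases lt_trichotomy i j with h | rfl | h
      · exact Or.inr (hmono _ _ h)
      · exact Or.inl (almostSubset_of_subset Subset.rfl)
      · exact Or.inl (hmono _ _ h)
  obtain ⟨D, hD, hDA⟩ := hp (range A) htower (mk_range_le.trans hJ)
  exact ⟨D, hD, fun j => hDA _ ⟨j, rfl⟩⟩

/-- An infinite set of natural numbers has an infinite subset whose gaps exceed a given function. -/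
theorem exists_sparse_subset {A : Set ℕ} (hA : A.Infinite) (f : ℕ → ℕ) :
    ∃ X ⊆ A, X.Infinite ∧ ∀ x ∈ X, ∀ y ∈ X, x < y → f x ≤ y := by
  choose nxt hnA hn using fun m => hA.exists_gt m
  let g : ℕ → ℕ := fun k => Nat.rec (nxt 0) (fun _ x => nxt (x + ∑ i ∈ Finset.range (x + 1), f i)) k
  have hg : ∀ k, g (k + 1) = nxt (g k + ∑ i ∈ Finset.range (g k + 1), f i) := fun _ => rfl
  have hstep : ∀ k, g k + ∑ i ∈ Finset.range (g k + 1), f i < g (k + 1) := fun k => by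
    rw [hg]
    exact hn _
  have hmono : StrictMono g := strictMono_nat_of_lt_succ fun k => by
    have := hstep k
    omega
  refine ⟨range g, ?_, infinite_range_of_injective hmono.injective, ?_⟩
  · rintro _ ⟨k, rfl⟩
    cases k with
    | zero => exact hnA _
    | succ k => exact hnA _
  · rintro _ ⟨k, rfl⟩ _ ⟨l, rfl⟩ hkl
    have h₁ : g (k + 1) ≤ g l := hmono.monotone (hmono.lt_iff_lt.1 hkl)
    have h₂ : f (g k) ≤ ∑ i ∈ Finset.range (g k + 1), f i :=
      Finset.single_le_sum (f := f) (fun _ _ => Nat.zero_le _) (by simp)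
    have := hstep k
    omega

/-- At most `p` functions are dominated on a common infinite set, if towers of size `p` are
bounded. -/
theorem TowersBounded.exists_dominating {p : Cardinal.{0}} (hp : TowersBounded p) {J : Type}
    (hJ : #J ≤ p) (f : J → ℕ → ℕ) :
    ∃ (A : Set ℕ) (k : ℕ → ℕ), A.Infinite ∧ ∀ j, ∀ᶠ n in almostAll A, f j n ≤ k n := by
  obtain ⟨_, _⟩ := exists_wellFoundedLT J
  obtain ⟨X, hX, hXmono⟩ := exists_transfinite_sequence
    (fun j (X : Set ℕ) => X.Infinite ∧ ∀ x ∈ X, ∀ y ∈ X, x < y → f j x ≤ y)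
    (fun _ _ X Y => AlmostSubset Y X) (by
      intro j X hX hXX
      obtain ⟨D, hD, hDX⟩ := hp.exists_almostSubset (J := Iio j) ((mk_set_le _).trans hJ)
        (fun i => X i) (fun i => (hX i i.2).1) fun i i' hi => hXX i i.2 i' hi
      obtain ⟨Y, hYD, hY, hYf⟩ := exists_sparse_subset hD (f j)
      exact ⟨Y, ⟨hY, hYf⟩, fun i hi => almostSubset_trans (almostSubset_of_subset hYD) (hDX ⟨i, hi⟩)⟩)
  obtain ⟨D, hD, hDX⟩ := hp.exists_almostSubset hJ X (fun j => (hX j).1) hXmono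
  choose k hkD hk using fun m => hD.exists_gt m
  refine ⟨D, k, hD, fun j => ?_⟩
  obtain ⟨m, hm⟩ := (hDX j).bddAbove
  have hmem : ∀ x ∈ D, m < x → x ∈ X j := fun x hx hmx => by
    by_contra h
    exact absurd (hm ⟨hx, h⟩) (not_le.2 hmx)
  filter_upwards [eventually_mem_almostAll D, eventually_almostAll_ge D (m + 1)] with n hn hmn
  exact (hX j).2 n (hmem n hn hmn) (k n) (hmem _ (hkD n) (by have := hk n; omega)) (hk n)

theorem mk_le_of_forall_mk_inter_Iio_lt {I : Type} [LinearOrder I] [WellFoundedLT I] (W : Set I)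
    (c : Cardinal) (h : ∀ γ ∈ W, #(W ∩ Iio γ : Set I) < c) : #W ≤ c := by
  by_contra! hc
  have hlt : c.ord < Ordinal.type (α := W) (· < ·) :=
    (ord_lt_ord.2 hc).trans_le (ord_le_type _)
  obtain ⟨γ, hγ⟩ := Ordinal.typein_surj (α := W) (· < ·) hlt
  have hcard : #{β : W // β < γ} = c := by
    have h' := Ordinal.card_typein (r := fun β β' : W => β < β') γ
    rw [hγ, card_ord] at h'
    exact h'.symm
  refine (h γ γ.2).not_ge (hcard ▸ ?_)
  refine mk_le_of_injective (f := fun β => ⟨β.1.1, β.1.2, β.2⟩) ?_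
  intro β β' hβ
  simpa [Subtype.ext_iff] using hβ

/-- A colouring of pairs with `#K` colours that is unbounded on every large set. -/
theorem exists_unbounded_coloring {I K : Type} [LinearOrder I] [WellFoundedLT I] [LinearOrder K]
    (hK : ℵ₀ ≤ #K) (hseg : ∀ i : K, #(Iic i) < #K) (hKI : #K < #I) :
    ∃ g : I → I → K, ∀ φ : I → K, ∃ β γ, β < γ ∧ φ β = φ γ ∧ φ γ < g β γ := by
  have hKne : Nonempty K := by
    rw [← mk_ne_zero_iff]
    exact (aleph0_pos.trans_le hK).ne'
  have hg : ∀ γ : I, ∃ e : I → K, #(Iio γ) ≤ #K → InjOn e (Iio γ) := by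
    intro γ
    by_cases h : #(Iio γ) ≤ #K
    · obtain ⟨e⟩ := h
      exact (exists_injOn_iff_injective.2 ⟨e, e.injective⟩).imp fun _ he _ => he
    · exact ⟨fun _ => hKne.some, fun h' => absurd h' h⟩
  choose g hg using hg
  refine ⟨fun β γ => g γ β, fun φ => ?_⟩
  by_contra! hφ
  let J : Set I := {γ | #(Iio γ) ≤ #K}
  have hJ : #K < #J := by
    by_cases h : Jᶜ.Nonempty
    · obtain ⟨γ, hγ, hmin⟩ := wellFounded_lt.has_min _ h
      refine (not_le.1 (show ¬ #(Iio γ) ≤ #K from hγ)).trans_le (mk_le_mk_of_subset fun β hβ => ?_)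
      by_contra hβJ
      exact hmin β hβJ hβ
    · rw [not_nonempty_iff_eq_empty, compl_empty_iff] at h
      rwa [h, mk_univ]
  have hW : ∀ i : K, #{γ ∈ J | φ γ = i} ≤ #K := by
    intro i
    refine mk_le_of_forall_mk_inter_Iio_lt _ _ ?_
    rintro γ ⟨hγ, rfl⟩
    refine lt_of_le_of_lt ?_ (hseg (φ γ))
    have hinj := hg γ hγ
    refine mk_le_of_injective
      (f := fun β => (⟨g γ β.1, hφ β.1 γ β.2.2 β.2.1.2⟩ : Iic (φ γ))) ?_
    intro β β' h
    exact Subtype.ext (hinj β.2.2 β'.2.2 (Subtype.ext_iff.1 h))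
  refine hJ.not_ge ?_
  have hJU : J = ⋃ i : K, {γ ∈ J | φ γ = i} := by
    ext γ
    simp
  calc #J = #(⋃ i : K, {γ ∈ J | φ γ = i}) := by rw [← hJU]
    _ ≤ #K * ⨆ i : K, #{γ ∈ J | φ γ = i} := mk_iUnion_le _
    _ ≤ #K * #K := mul_le_mul_right (ciSup_le' hW) _
    _ = #K := mul_eq_self hK

/-- Finite approximations: a height, a relation telling which values are active at which level, and
a labelled relation on values. -/
structure Approx where
  /-- The height up to which the approximation is meaningful. -/
  height : ℕ
  /-- The pairs `(w, x)` such that `x` is active at level `w`. -/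
  active : Set (ℕ × ℕ)
  /-- The triples `(x', x, y)` such that the pair `x < x'` carries the label `y`. -/
  label : Set (ℕ × ℕ × ℕ)

namespace Approx

instance : Nonempty Approx := ⟨⟨0, ∅, ∅⟩⟩

/-- Labels of pairs that are active at a level are at least that level, and everything lives
below `N`. -/
structure Valid (N : ℕ) (z : Approx) : Prop where
  height_lt : z.height < N
  active_lt : ∀ w x, (w, x) ∈ z.active → w < N ∧ x < w
  label_lt : ∀ x' x y, (x', x, y) ∈ z.label → x' < N ∧ x < x' ∧ y < N
  le_label : ∀ w ≤ z.height, ∀ x x' y, (w, x) ∈ z.active → (w, x') ∈ z.active →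
    (x', x, y) ∈ z.label → w ≤ y

theorem finite_valid (N : ℕ) : {z : Approx | z.Valid N}.Finite := by
  have hE : (𝒫 (Iio N ×ˢ Iio N : Set (ℕ × ℕ))).Finite :=
    ((finite_Iio N).prod (finite_Iio N)).finite_subsets
  have hH : (𝒫 (Iio N ×ˢ Iio N ×ˢ Iio N : Set (ℕ × ℕ × ℕ))).Finite :=
    ((finite_Iio N).prod ((finite_Iio N).prod (finite_Iio N))).finite_subsets
  refine Finite.of_finite_image (f := fun z : Approx => (z.height, z.active, z.label))
    (((finite_Iio N).prod (hE.prod hH)).subset ?_) ?_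
  · rintro _ ⟨z, hz, rfl⟩
    refine ⟨hz.height_lt, ?_, ?_⟩
    · rintro ⟨w, x⟩ h
      have := hz.active_lt _ _ h
      exact ⟨this.1, this.2.trans this.1⟩
    · rintro ⟨x', x, y⟩ h
      have := hz.label_lt _ _ _ h
      exact ⟨this.1, this.2.1.trans this.1, this.2.2⟩
  · rintro ⟨_, _, _⟩ _ ⟨_, _, _⟩ _ h
    simpa using h

/-- `z'` agrees with `z` up to the height of `z`. -/
structure Initial (z z' : Approx) : Prop where
  height_le : z.height ≤ z'.height
  active_iff : ∀ w ≤ z.height, ∀ x, (w, x) ∈ z'.active ↔ (w, x) ∈ z.active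
  label_iff : ∀ x' ≤ z.height, ∀ x y, (x', x, y) ∈ z'.label ↔ (x', x, y) ∈ z.label

theorem Initial.refl (z : Approx) : z.Initial z :=
  ⟨le_rfl, fun _ _ _ => Iff.rfl, fun _ _ _ _ => Iff.rfl⟩

theorem Initial.trans {z₁ z₂ z₃ : Approx} (h : z₁.Initial z₂) (h' : z₂.Initial z₃) :
    z₁.Initial z₃ where
  height_le := h.height_le.trans h'.height_le
  active_iff w hw x :=
    (h'.active_iff w (hw.trans h.height_le) x).trans (h.active_iff w hw x)
  label_iff x' hx' x y :=
    (h'.label_iff x' (hx'.trans h.height_le) x y).trans (h.label_iff x' hx' x y)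

/-- `z'` is a proper extension of `z` in which the height of `z` is active at all new levels, and
the pair of heights is labelled by `y` only. -/
structure Link (z z' : Approx) (y : ℕ) : Prop where
  initial : z.Initial z'
  height_lt : z.height < z'.height
  label_iff : ∀ y', (z'.height, z.height, y') ∈ z'.label ↔ y' = y
  active : ∀ w, z.height < w → w ≤ z'.height → (w, z.height) ∈ z'.active

/-- A finite linked chain of valid approximations can be prolonged to any larger height that is
bounded by the labels of the chain. -/
theorem exists_link {I : Type*} [LinearOrder I] (T : Finset I) (z : I → Approx) (y : I → I → ℕ)
    (t : I → ℕ) {N v : ℕ} (hvN : v < N) (hvalid : ∀ β ∈ T, (z β).Valid N)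
    (hlink : ∀ β ∈ T, ∀ γ ∈ T, β < γ → (z β).Link (z γ) (y β γ))
    (hlt : ∀ β ∈ T, (z β).height < v) (hy : ∀ β ∈ T, ∀ γ ∈ T, β < γ → v ≤ y β γ)
    (ht : ∀ β ∈ T, t β < N) :
    ∃ z' : Approx, z'.Valid N ∧ z'.height = v ∧ ∀ β ∈ T, (z β).Link z' (t β) := by
  rcases T.eq_empty_or_nonempty with rfl | hT
  · exact ⟨⟨v, ∅, ∅⟩, ⟨hvN, by simp, by simp, by simp⟩, rfl, by simp⟩
  obtain ⟨μ, hμ, hmax⟩ : ∃ μ ∈ T, ∀ β ∈ T, β ≤ μ := ⟨T.max' hT, T.max'_mem hT, T.le_max'⟩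
  have hmono : ∀ β ∈ T, ∀ γ ∈ T, β < γ → (z β).height < (z γ).height :=
    fun β hβ γ hγ h => (hlink β hβ γ hγ h).height_lt
  have hinit : ∀ β ∈ T, (z β).Initial (z μ) := by
    intro β hβ
    rcases (hmax β hβ).eq_or_lt with rfl | h
    · exact Initial.refl _
    · exact (hlink β hβ μ hμ h).initial
  have hvμ := hlt μ hμ
  refine ⟨⟨v, {q | q.1 ≤ (z μ).height ∧ q ∈ (z μ).active ∨
      (z μ).height < q.1 ∧ q.1 ≤ v ∧ ∃ β ∈ T, q.2 = (z β).height},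
    {q | q.1 ≤ (z μ).height ∧ q ∈ (z μ).label ∨
      q.1 = v ∧ ∃ β ∈ T, q.2.1 = (z β).height ∧ q.2.2 = t β}⟩, ⟨hvN, ?_, ?_, ?_⟩, rfl, ?_⟩
  · rintro w x (⟨-, h⟩ | ⟨hw, hwv, β, hβ, rfl : x = _⟩)
    · exact (hvalid μ hμ).active_lt w x h
    · exact ⟨hwv.trans_lt hvN, (hinit β hβ).height_le.trans_lt hw⟩
  · rintro x' x y' (⟨-, h⟩ | ⟨rfl : x' = v, β, hβ, rfl : x = _, rfl : y' = _⟩)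
    · exact (hvalid μ hμ).label_lt _ _ _ h
    · exact ⟨hvN, hlt β hβ, ht β hβ⟩
  · rintro w hwv x x' y' (⟨hw, h⟩ | ⟨hw, -, β, hβ, rfl : x = _⟩)
      (⟨hw', h'⟩ | ⟨hw', -, γ, hγ, rfl : x' = _⟩) hl
    · have hx' := ((hvalid μ hμ).active_lt _ _ h').2
      rcases hl with ⟨-, hl⟩ | ⟨hl, -⟩
      · exact (hvalid μ hμ).le_label w hw x x' y' h h' hl
      · dsimp only at *
        omega
    · exact absurd hw (not_le.2 hw')
    · exact absurd hw' (not_le.2 hw)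
    · have hγμ := (hinit γ hγ).height_le
      rcases hl with ⟨-, hl⟩ | ⟨hl, -⟩
      · have hl' := ((hinit γ hγ).label_iff _ le_rfl _ _).1 hl
        have hlt' := ((hvalid γ hγ).label_lt _ _ _ hl').2.1
        have hβγ : β < γ := by
          by_contra! hβγ
          rcases hβγ.eq_or_lt with rfl | hβγ
          · exact lt_irrefl _ hlt'
          · exact lt_asymm hlt' (hmono _ hγ _ hβ hβγ)
        rw [((hlink β hβ γ hγ hβγ).label_iff y').1 hl']
        exact hwv.trans (hy β hβ γ hγ hβγ)
      · dsimp only at *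
        omega
  · intro β hβ
    have hβμ := (hinit β hβ).height_le
    refine ⟨⟨(hlt β hβ).le, ?_, ?_⟩, hlt β hβ, ?_, ?_⟩
    · intro w hw x
      rw [← (hinit β hβ).active_iff w hw x]
      constructor
      · rintro (⟨-, h⟩ | ⟨h, -⟩)
        · exact h
        · exact absurd (hw.trans hβμ) (not_le.2 h)
      · exact fun h => Or.inl ⟨hw.trans hβμ, h⟩
    · intro x' hx' x y'
      rw [← (hinit β hβ).label_iff x' hx' x y']
      constructor
      · rintro (⟨-, h⟩ | ⟨h, -⟩)
        · exact h
        · dsimp only at *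
          omega
      · exact fun h => Or.inl ⟨hx'.trans hβμ, h⟩
    · intro y'
      constructor
      · rintro (⟨h, -⟩ | ⟨-, γ, hγ, hγβ, h⟩)
        · exact absurd h (not_le.2 hvμ)
        · dsimp only at hγβ h
          rcases lt_trichotomy β γ with hlt' | rfl | hlt'
          · exact absurd hγβ (hmono β hβ γ hγ hlt').ne
          · exact h
          · exact absurd hγβ (hmono γ hγ β hβ hlt').ne'
      · rintro rfl
        exact Or.inr ⟨rfl, β, hβ, rfl, rfl⟩
    · intro w hw hwv
      rcases le_or_gt w (z μ).height with h | h
      · refine Or.inl ⟨h, ?_⟩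
        rcases (hmax β hβ).eq_or_lt with rfl | hβμ'
        · exact absurd h (not_le.2 hw)
        · exact (hlink β hβ μ hμ hβμ').active w hw h
      · exact Or.inr ⟨h, hwv, β, hβ, rfl⟩

end Approx

theorem infinite_of_eventually {A : Set ℕ} (hA : A.Infinite) {P : ℕ → Prop}
    (h : ∀ᶠ n in almostAll A, P n) : {n | P n}.Infinite := by
  intro hP
  refine hA ((hP.union (eventually_almostAll.1 h)).subset fun n hn => ?_)
  by_cases hn' : P n
  · exact Or.inl hn'
  · exact Or.inr ⟨hn, hn'⟩

/-- Let `a` be a decreasing sequence and `b` a family of `p` functions below all `a i`, such that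
every function that is below all `a i` on an infinite set is below some `b α` there. Then there is a
coherent sequence of approximations with heights above the `b α` and below all `a i`. -/
theorem Saturated.exists_linked_sequence {p : Cardinal.{0}} (hsat : Saturated p) (hp : ℵ₀ ≤ p)
    {I K : Type} [LinearOrder I] [WellFoundedLT I] [LinearOrder K] [NoMaxOrder K] [Nonempty K]
    (hIseg : ∀ α : I, #(Iio α) < p) (hKp : #K < p) (N : ℕ → ℕ) {A₁ : Set ℕ} (hA₁ : A₁.Infinite)
    (a : K → ℕ → ℕ) (b : I → ℕ → ℕ) (haN : ∀ i n, a i n < N n)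
    (ha : ∀ i j, i < j → ∀ᶠ n in almostAll A₁, a j n < a i n)
    (hba : ∀ α i, ∀ᶠ n in almostAll A₁, b α n ≤ a i n) (g : I → I → K) :
    ∃ (A : I → Set ℕ) (z : I → ℕ → Approx),
      (∀ α, (A α).Infinite ∧ AlmostSubset (A α) A₁ ∧
        (∀ᶠ n in almostAll (A α), (z α n).Valid (N n) ∧ b α n ≤ (z α n).height) ∧
        ∀ i, ∀ᶠ n in almostAll (A α), (z α n).height < a i n) ∧
      ∀ α, ∀ β < α, AlmostSubset (A α) (A β) ∧
        ∀ᶠ n in almostAll (A α), (z β n).Link (z α n) (a (g β α) n) := by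
  classical
  obtain ⟨f, hU, hR⟩ := exists_transfinite_sequence (X := Set ℕ × (ℕ → Approx))
    (fun α X => X.1.Infinite ∧ AlmostSubset X.1 A₁ ∧
      (∀ᶠ n in almostAll X.1, (X.2 n).Valid (N n) ∧ b α n ≤ (X.2 n).height) ∧
      ∀ i, ∀ᶠ n in almostAll X.1, (X.2 n).height < a i n)
    (fun β α X Y => AlmostSubset Y.1 X.1 ∧
      ∀ᶠ n in almostAll Y.1, (X.2 n).Link (Y.2 n) (a (g β α) n)) (by
    intro α f hU hR
    let S : ℕ → Set Approx := fun n => {z | n ∈ A₁ ∧ z.Valid (N n) ∧ b α n ≤ z.height}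
    let P : Iio α ⊕ K → ℕ → Approx → Prop := fun j n z =>
      Sum.elim (fun β : Iio α => n ∈ (f β).1 ∧ ((f β).2 n).Link z (a (g β α) n))
        (fun i => z.height < a i n) j
    obtain ⟨A, z, hA, hzS, hzP⟩ := hsat.exists_section (J := Iio α ⊕ K) (Z := Approx)
      (by simpa using add_lt_of_lt hp (hIseg α) hKp) S
      (fun n => (Approx.finite_valid (N n)).subset fun z hz => hz.2.1) P (by
        intro T
        let T₁ : Finset I := T.toLeft.map (Function.Embedding.subtype _)
        have hT₁ : ∀ β ∈ T₁, β < α := by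
          intro β hβ
          obtain ⟨β', -, rfl⟩ := Finset.mem_map.1 hβ
          exact β'.2
        obtain ⟨A, hA, hAA₁, hAT⟩ : ∃ A : Set ℕ, A.Infinite ∧ AlmostSubset A A₁ ∧
            ∀ β ∈ T₁, AlmostSubset A (f β).1 := by
          rcases T₁.eq_empty_or_nonempty with h | h
          · exact ⟨A₁, hA₁, almostSubset_of_subset Subset.rfl, by simp [h]⟩
          · have hμ := T₁.max'_mem h
            refine ⟨(f (T₁.max' h)).1, (hU _ (hT₁ _ hμ)).1, (hU _ (hT₁ _ hμ)).2.1, ?_⟩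
            intro β hβ
            rcases (T₁.le_max' β hβ).eq_or_lt with heq | hlt
            · rw [← heq]
              exact almostSubset_of_subset Subset.rfl
            · exact (hR _ (hT₁ _ hμ) β hlt).1
        let L : Finset K := T.toRight ∪ Finset.image₂ g T₁ T₁
        obtain ⟨m, hm⟩ := L.exists_le
        obtain ⟨i, hi⟩ := exists_gt m
        have hA₁' := almostAll_mono hAA₁
        have hmem : ∀ᶠ n in almostAll A, ∀ β ∈ T₁, n ∈ (f β).1 :=
          (Finset.eventually_all T₁).2 fun β hβ => almostSubset_iff.1 (hAT β hβ)
        have hvalid : ∀ᶠ n in almostAll A, ∀ β ∈ T₁, ((f β).2 n).Valid (N n) :=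
          (Finset.eventually_all T₁).2 fun β hβ =>
            ((hU β (hT₁ β hβ)).2.2.1.filter_mono (almostAll_mono (hAT β hβ))).mono
              fun n hn => hn.1
        have hheight : ∀ᶠ n in almostAll A, ∀ β ∈ T₁, ((f β).2 n).height < a i n :=
          (Finset.eventually_all T₁).2 fun β hβ =>
            ((hU β (hT₁ β hβ)).2.2.2 i).filter_mono (almostAll_mono (hAT β hβ))
        have hlink : ∀ᶠ n in almostAll A, ∀ β ∈ T₁, ∀ γ ∈ T₁, β < γ →
            ((f β).2 n).Link ((f γ).2 n) (a (g β γ) n) :=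
          (Finset.eventually_all T₁).2 fun β hβ => (Finset.eventually_all T₁).2 fun γ hγ => by
            by_cases h : β < γ
            · filter_upwards [(hR γ (hT₁ γ hγ) β h).2.filter_mono (almostAll_mono (hAT γ hγ))]
                with n hn _ using hn
            · exact Eventually.of_forall fun n h' => absurd h' h
        have hL : ∀ᶠ n in almostAll A, ∀ j ∈ L, a i n < a j n :=
          (Finset.eventually_all L).2 fun j hj =>
            (ha j i ((hm j hj).trans_lt hi)).filter_mono hA₁'
        refine infinite_of_eventually hA ?_
        filter_upwards [almostSubset_iff.1 hAA₁, hmem, hvalid, hheight, hlink, hL,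
          (hba α i).filter_mono hA₁'] with n hnA₁ hnmem hnvalid hnheight hnlink hnL hnb
        obtain ⟨z, hz, hzv, hzl⟩ := Approx.exists_link T₁ (fun β => (f β).2 n)
          (fun β γ => a (g β γ) n) (fun β => a (g β α) n) (haN i n) hnvalid hnlink hnheight
          (fun β hβ γ hγ _ => (hnL _ (Finset.mem_union_right _
            (Finset.mem_image₂_of_mem hβ hγ))).le) (fun β _ => haN _ n)
        refine ⟨z, ⟨hnA₁, hz, hzv ▸ hnb⟩, ?_⟩
        rintro (β | j) hj
        · have hβ : (β : I) ∈ T₁ :=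
            Finset.mem_map.2 ⟨β, Finset.mem_toLeft.2 hj, rfl⟩
          exact ⟨hnmem β hβ, hzl β hβ⟩
        · have := hnL j (Finset.mem_union_left _ (Finset.mem_toRight.2 hj))
          exact hzv.trans_lt this)
    refine ⟨(A, z), ⟨hA, almostSubset_of_subset fun n hn => (hzS n hn).1, ?_, fun i =>
      hzP (Sum.inr i)⟩, fun β hβ => ⟨?_, ?_⟩⟩
    · exact (eventually_mem_almostAll A).mono fun n hn => (hzS n hn).2
    · exact almostSubset_iff.2 ((hzP (Sum.inl ⟨β, hβ⟩)).mono fun n hn => hn.1)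
    · exact (hzP (Sum.inl ⟨β, hβ⟩)).mono fun n hn => hn.2)
  exact ⟨fun α => (f α).1, fun α => (f α).2, hU, hR⟩

/-- If towers of size `p` are bounded, then there is no peculiar gap whose sides have size
`#K < p` and `p`. -/
theorem not_exists_peculiar_gap {p : Cardinal.{0}} (hsat : Saturated p) (htow : TowersBounded p)
    {I K : Type} [LinearOrder I] [WellFoundedLT I] [LinearOrder K] [NoMaxOrder K]
    (hI : #I = p) (hIseg : ∀ α : I, #(Iio α) < p)
    (hK : ℵ₀ ≤ #K) (hKseg : ∀ i : K, #(Iio i) < #K) (hKp : #K < p)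
    (N : ℕ → ℕ) {A₁ : Set ℕ} (hA₁ : A₁.Infinite)
    (a : K → ℕ → ℕ) (b : I → ℕ → ℕ) (haN : ∀ i n, a i n < N n)
    (ha : ∀ i j, i < j → ∀ᶠ n in almostAll A₁, a j n < a i n)
    (hba : ∀ α i, ∀ᶠ n in almostAll A₁, b α n ≤ a i n)
    (hgap : ∀ (A : Set ℕ) (h : ℕ → ℕ), A.Infinite → AlmostSubset A A₁ →
      (∀ i, ∀ᶠ n in almostAll A, h n ≤ a i n) → ∃ α, ∀ᶠ n in almostAll A, h n < b α n) :
    False := by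
  classical
  have hKne : Nonempty K := by
    rw [← mk_ne_zero_iff]
    exact (aleph0_pos.trans_le hK).ne'
  have hIne : Nonempty I := by
    rw [← mk_ne_zero_iff, hI]
    exact ((zero_le).trans_lt hKp).ne'
  obtain ⟨g, hg⟩ := exists_unbounded_coloring (I := I) hK
    (fun i => by
      obtain ⟨j, hj⟩ := exists_gt i
      exact (mk_le_mk_of_subset fun l hl => lt_of_le_of_lt hl hj).trans_lt (hKseg j))
    (hI ▸ hKp)
  obtain ⟨A, z, hU, hR⟩ := hsat.exists_linked_sequence (hK.trans hKp.le) hIseg hKp N hA₁ a b haN ha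
    hba g
  obtain ⟨D, c, hD, hcv, hc⟩ := htow.exists_section hI.le (fun n => {c : Approx | c.Valid (N n)})
    (fun n => Approx.finite_valid (N n))
    (fun α n c => n ∈ A α ∧ (z α n).Initial c)
    (by
      intro β α hβα
      have h := (almostSubset_iff.1 (hR α β hβα).1).and (hR α β hβα).2
      refine (eventually_almostAll.1 h).subset ?_
      rintro n ⟨c, -, ⟨hnα, hinit⟩, hnot⟩
      exact ⟨hnα, fun hn => hnot ⟨hn.1, hn.2.initial.trans hinit⟩⟩)
    (by
      intro α
      refine infinite_of_eventually (hU α).1 ?_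
      filter_upwards [eventually_mem_almostAll (A α), (hU α).2.2.1] with n hn hn'
      exact ⟨z α n, hn'.1, hn, Approx.Initial.refl _⟩)
  have hDA : ∀ α, AlmostSubset D (A α) := fun α => almostSubset_iff.2 ((hc α).mono fun n hn => hn.1)
  have hDle : ∀ α, almostAll D ≤ almostAll (A α) := fun α => almostAll_mono (hDA α)
  have hDA₁ : AlmostSubset D A₁ :=
    almostSubset_trans (hDA (Classical.arbitrary I)) (hU (Classical.arbitrary I)).2.1
  let act : I → ℕ → ℕ → Prop := fun β n u =>
    ∀ w, (z β n).height < w → w ≤ u → (w, (z β n).height) ∈ (c n).active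
  let u : I → ℕ → ℕ := fun β n => Nat.findGreatest (act β n) (c n).height
  have hbu : ∀ β α, ∀ᶠ n in almostAll D, b α n ≤ u β n := by
    intro β α
    have hα := ((hU α).2.2.1).filter_mono (hDle α)
    rcases le_or_gt α β with h | h
    · have hle : ∀ᶠ n in almostAll D, (z α n).height ≤ (z β n).height := by
        rcases h.eq_or_lt with rfl | h
        · exact Eventually.of_forall fun n => le_rfl
        · exact ((hR β α h).2.filter_mono (hDle β)).mono fun n hn => hn.height_lt.le
      filter_upwards [hα, hle, hc β] with n hn hn' hn''
      refine (hn.2.trans hn').trans (Nat.le_findGreatest hn''.2.height_le ?_)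
      exact fun w hw hw' => absurd hw' (not_le.2 hw)
    · filter_upwards [hα, hc α, (hR α β h).2.filter_mono (hDle α)] with n hn hn' hn''
      refine hn.2.trans (Nat.le_findGreatest hn'.2.height_le ?_)
      exact fun w hw hw' => (hn'.2.active_iff w hw' _).2 (hn''.active w hw hw')
  have hau : ∀ β, ∃ i, ∀ᶠ n in almostAll D, a i n ≤ u β n := by
    intro β
    by_contra! hcon
    obtain ⟨E, hE, hEsub⟩ := htow.exists_almostSubset hKp.le
      (fun i => {n ∈ D | u β n < a i n})
      (fun i hfin => hcon i (eventually_almostAll.2 (by simpa using hfin)))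
      (fun j i hij => by
        refine (eventually_almostAll.1 ((ha i j hij).filter_mono (almostAll_mono hDA₁))).subset ?_
        rintro n ⟨⟨hnD, hn⟩, hn'⟩
        exact ⟨hnD, fun h => hn' ⟨hnD, hn.trans h⟩⟩)
    have hED : AlmostSubset E D :=
      almostSubset_trans (hEsub (Classical.arbitrary K)) (almostSubset_of_subset (sep_subset _ _))
    obtain ⟨α, hα⟩ := hgap E (u β) hE (almostSubset_trans hED hDA₁)
      (fun i => (almostSubset_iff.1 (hEsub i)).mono fun n hn => hn.2.le)
    have := neBot_almostAll hE
    obtain ⟨n, hn, hn'⟩ := (hα.and ((hbu β α).filter_mono (almostAll_mono hED))).exists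
    exact absurd hn (not_lt.2 hn')
  choose φ hφ using hau
  obtain ⟨β, γ, hβγ, hφβ, hφγ⟩ := hg φ
  have hspec : ∀ δ, ∀ᶠ n in almostAll D, (a (φ δ) n, (z δ n).height) ∈ (c n).active := by
    intro δ
    filter_upwards [hφ δ, hc δ, ((hU δ).2.2.2 (φ δ)).filter_mono (hDle δ)] with n hn hn' hn''
    have hact : act δ n (u δ n) := Nat.findGreatest_spec (P := act δ n) hn'.2.height_le
      fun w hw hw' => absurd hw' (not_le.2 hw)
    exact hact _ hn'' hn
  have := neBot_almostAll hD
  obtain ⟨n, hnD, hn₁, hn₂, hn₃, hn₄, hn₅, hn₆⟩ := ((eventually_mem_almostAll D).and <|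
    (hspec β).and <| (hspec γ).and <| (hφ γ).and <| (hc γ).and <|
    ((hR γ β hβγ).2.filter_mono (hDle γ)).and <|
    (ha _ _ hφγ).filter_mono (almostAll_mono hDA₁)).exists
  rw [hφβ] at hn₁
  have hlab := (hn₄.2.label_iff _ le_rfl _ _).2 ((hn₅.label_iff _).2 rfl)
  have := (hcv n hnD).le_label _ (hn₃.trans (Nat.findGreatest_le _)) _ _ _ hn₁ hn₂ hlab
  omega

theorem mk_Iio_ord_toType_lt {c : Cardinal.{0}} (i : c.ord.ToType) : #(Iio i) < c :=
  (mk_Iio_lt i (by simp)).trans_eq (mk_ord_toType c)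

theorem exists_almostSubset_of_finite {𝒜 : Set (Set ℕ)} (hfin : 𝒜.Finite)
    (hchain : ∀ A ∈ 𝒜, ∀ B ∈ 𝒜, AlmostSubset A B ∨ AlmostSubset B A) :
    ∃ A ∈ insert Set.univ 𝒜, ∀ B ∈ 𝒜, AlmostSubset A B := by
  induction 𝒜, hfin using Set.Finite.induction_on with
  | empty => exact ⟨Set.univ, mem_insert _ _, by simp⟩
  | @insert C 𝒜 _ _ ih =>
    obtain ⟨A, hA, hAB⟩ := ih fun A hA B hB => hchain A (Or.inr hA) B (Or.inr hB)
    have hCA : AlmostSubset C A ∨ AlmostSubset A C := by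
      rcases hA with rfl | hA
      · exact Or.inl (almostSubset_of_subset (subset_univ _))
      · exact hchain C (Or.inl rfl) A (Or.inr hA)
    rcases hCA with h | h
    · refine ⟨C, Or.inr (Or.inl rfl), ?_⟩
      rintro B (rfl | hB)
      · exact almostSubset_of_subset Subset.rfl
      · exact almostSubset_trans h (hAB B hB)
    · refine ⟨A, hA.imp id Or.inr, ?_⟩
      rintro B (rfl | hB)
      · exact h
      · exact hAB B hB

theorem _root_.IsTower.sfip {F : Set (Set ℕ)} (hF : IsTower F) : SFIP F := by
  intro S hS
  obtain ⟨A, hA, hAS⟩ := exists_almostSubset_of_finite S.finite_toSet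
    fun A hA B hB => hF.2 A (hS hA) B (hS hB)
  have hAinf : A.Infinite := by
    rcases hA with rfl | hA
    · exact infinite_univ
    · exact hF.1 A (hS hA)
  exact infinite_of_eventually hAinf
    ((Finset.eventually_all S).2 fun B hB => almostSubset_iff.1 (hAS B hB))

/-- A chain of sets meeting every `B α` in an infinite set, without a pseudo-intersection having
the same property. -/
structure IsBadChain {I : Type} (B : I → Set ℕ) (𝒜 : Set (Set ℕ)) : Prop where
  chain : ∀ A ∈ 𝒜, ∀ A' ∈ 𝒜, AlmostSubset A A' ∨ AlmostSubset A' A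
  inter_infinite : ∀ A ∈ 𝒜, ∀ α, (A ∩ B α).Infinite
  exists_inter_finite : ∀ A, (∀ A' ∈ 𝒜, AlmostSubset A A') → ∃ α, (A ∩ B α).Finite

theorem IsBadChain.of_coinitial {I : Type} {B : I → Set ℕ} {𝒜 𝒜' : Set (Set ℕ)}
    (h : IsBadChain B 𝒜) (hsub : 𝒜' ⊆ 𝒜) (hco : ∀ A ∈ 𝒜, ∃ A' ∈ 𝒜', AlmostSubset A' A) :
    IsBadChain B 𝒜' where
  chain A hA A' hA' := h.chain A (hsub hA) A' (hsub hA')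
  inter_infinite A hA := h.inter_infinite A (hsub hA)
  exists_inter_finite A hA := h.exists_inter_finite A fun C hC => by
    obtain ⟨A', hA', hC'⟩ := hco C hC
    exact almostSubset_trans (hA A' hA') hC'

theorem IsBadChain.infinite {I : Type} {B : I → Set ℕ} {𝒜 : Set (Set ℕ)}
    (h : IsBadChain B 𝒜) (hB : ∀ α, (B α).Infinite) : 𝒜.Infinite := by
  intro hfin
  obtain ⟨A, hA, hA'⟩ := exists_almostSubset_of_finite hfin h.chain
  obtain ⟨α, hα⟩ := h.exists_inter_finite A hA'
  rcases hA with rfl | hA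
  · exact hB α (by simpa using hα)
  · exact h.inter_infinite A hA α hα

theorem TowersBounded.exists_isBadChain {p : Cardinal.{0}} (htow : TowersBounded p) {I : Type}
    [LinearOrder I] [WellFoundedLT I] (hI : #I ≤ p) (hIseg : ∀ α : I, #(Iio α) < p)
    (B : I → Set ℕ) (hdir : ∀ α β, ∃ γ, B γ ⊆ B α ∩ B β)
    (hpi : ¬ ∃ A : Set ℕ, A.Infinite ∧ ∀ α, AlmostSubset A (B α)) :
    ∃ 𝒜 : Set (Set ℕ), IsBadChain B 𝒜 ∧ #𝒜 < p := by
  by_contra! hbad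
  obtain ⟨A, hU, hR⟩ := exists_transfinite_sequence
    (fun α (A : Set ℕ) => (∀ β, (A ∩ B β).Infinite) ∧ A ⊆ B α)
    (fun _ _ A A' => AlmostSubset A' A) (by
      intro α A hU hR
      have hcard : #(A '' Iio α) < p := mk_image_le.trans_lt (hIseg α)
      obtain ⟨D, hD, hDB⟩ : ∃ D, (∀ C ∈ A '' Iio α, AlmostSubset D C) ∧
          ∀ β, (D ∩ B β).Infinite := by
        by_contra! hcon
        refine hcard.not_ge (hbad _ ⟨?_, ?_, ?_⟩)
        · rintro _ ⟨β, hβ, rfl⟩ _ ⟨γ, hγ, rfl⟩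
          rcases lt_trichotomy β γ with h | rfl | h
          · exact Or.inr (hR γ hγ β h)
          · exact Or.inl (almostSubset_of_subset Subset.rfl)
          · exact Or.inl (hR β hβ γ h)
        · rintro _ ⟨β, hβ, rfl⟩
          exact (hU β hβ).1
        · exact hcon
      refine ⟨D ∩ B α, ⟨fun β => ?_, inter_subset_right⟩, fun β hβ =>
        almostSubset_trans (almostSubset_of_subset inter_subset_left) (hD _ ⟨β, hβ, rfl⟩)⟩
      obtain ⟨γ, hγ⟩ := hdir α β
      exact (hDB γ).mono fun n hn => ⟨⟨hn.1, (hγ hn.2).1⟩, (hγ hn.2).2⟩)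
  obtain ⟨D, hD, hDA⟩ := htow.exists_almostSubset hI A
    (fun α => ((hU α).1 α).mono inter_subset_left) hR
  exact hpi ⟨D, hD, fun α => almostSubset_trans (hDA α) (almostSubset_of_subset (hU α).2)⟩

/-- A bad chain of least size contains a strictly decreasing bad chain indexed by an initial
ordinal. -/
theorem IsBadChain.exists_strict {I : Type} {B : I → Set ℕ} {𝒜₀ : Set (Set ℕ)}
    (h₀ : IsBadChain B 𝒜₀) (hB : ∀ α, (B α).Infinite) :
    ∃ κ : Cardinal.{0}, ℵ₀ ≤ κ ∧ κ ≤ #𝒜₀ ∧ ∃ A : κ.ord.ToType → Set ℕ,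
      IsBadChain B (range A) ∧
      ∀ i j, i < j → AlmostSubset (A j) (A i) ∧ ¬ AlmostSubset (A i) (A j) := by
  obtain ⟨𝒜, h, hmin⟩ := (InvImage.wf (fun 𝒜 : Set (Set ℕ) => #𝒜) Cardinal.lt_wf).has_min
    {𝒜 | IsBadChain B 𝒜} ⟨𝒜₀, h₀⟩
  have hmin' : ∀ 𝒜', IsBadChain B 𝒜' → #𝒜 ≤ #𝒜' := fun 𝒜' h' => not_lt.1 (hmin 𝒜' h')
  have hinf : ℵ₀ ≤ #𝒜 := by
    have := (h.infinite hB).to_subtype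
    exact aleph0_le_mk 𝒜
  have hne : Nonempty 𝒜 := by
    rw [← mk_ne_zero_iff]
    exact (aleph0_pos.trans_le hinf).ne'
  obtain ⟨x⟩ := Cardinal.eq.1 (mk_ord_toType #𝒜)
  obtain ⟨A, hU, hR⟩ := exists_transfinite_sequence (X := 𝒜)
    (fun (i : (#𝒜).ord.ToType) A => AlmostSubset A (x i))
    (fun _ _ A A' => ¬ AlmostSubset (A : Set ℕ) A') (by
      intro i A _ _
      let 𝒜' : Set (Set ℕ) := insert (x i : Set ℕ) ((fun j => (A j : Set ℕ)) '' Iio i)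
      have hsub : 𝒜' ⊆ 𝒜 := by
        rintro _ (rfl | ⟨j, _, rfl⟩)
        · exact (x i).2
        · exact (A j).2
      have hcard : #𝒜' < #𝒜 := mk_insert_le.trans_lt (add_lt_of_lt hinf
        (mk_image_le.trans_lt (mk_Iio_ord_toType_lt i)) (one_lt_aleph0.trans_le hinf))
      obtain ⟨C, hC, hC'⟩ : ∃ C ∈ 𝒜, ∀ A' ∈ 𝒜', ¬ AlmostSubset A' C := by
        by_contra! hcon
        exact hcard.not_ge (hmin' _ (h.of_coinitial hsub hcon))
      refine ⟨⟨C, hC⟩, ?_, fun j hj => hC' _ (Or.inr ⟨j, hj, rfl⟩)⟩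
      exact (h.chain C hC (x i) (x i).2).resolve_right (hC' _ (Or.inl rfl)))
  refine ⟨#𝒜, hinf, hmin' _ h₀, fun i => A i, h.of_coinitial ?_ ?_, fun i j hij => ⟨?_, hR j i hij⟩⟩
  · rintro _ ⟨i, rfl⟩
    exact (A i).2
  · intro C hC
    refine ⟨A (x.symm ⟨C, hC⟩), ⟨_, rfl⟩, ?_⟩
    simpa using hU (x.symm ⟨C, hC⟩)
  · exact (h.chain _ (A j).2 _ (A i).2).resolve_right (hR j i hij)

/-- The union of the members of `c` with at most `x` elements. -/
def level (c : Set (Set ℕ)) (x : ℕ) : Set ℕ := ⋃₀ {s ∈ c | s.ncard ≤ x}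

theorem level_mono (c : Set (Set ℕ)) : Monotone (level c) :=
  fun _ _ h => sUnion_subset_sUnion fun _ hs => ⟨hs.1, hs.2.trans h⟩

theorem level_ncard {c : Set (Set ℕ)} (hc : IsChain (· ⊆ ·) c) (hfin : ∀ s ∈ c, s.Finite)
    {s : Set ℕ} (hs : s ∈ c) : level c s.ncard = s := by
  refine Subset.antisymm (sUnion_subset fun s' hs' => ?_) (subset_sUnion_of_mem ⟨hs, le_rfl⟩)
  rcases hc.total hs hs'.1 with h | h
  · exact (eq_of_subset_of_ncard_le h hs'.2 (hfin _ hs'.1)).symm.subset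
  · exact h

theorem exists_forall_ge_of_almostSubset {A B : Set ℕ} (h : AlmostSubset A B) :
    ∃ m, ∀ x ≥ m, x ∈ A → x ∈ B := by
  obtain ⟨m, hm⟩ := h.bddAbove
  refine ⟨m + 1, fun x hx hxA => ?_⟩
  by_contra hxB
  exact absurd (hm ⟨hxA, hxB⟩) (not_le.2 hx)

/-- Finite windows meeting at most `p` given infinite sets. -/
theorem TowersBounded.exists_windows {p : Cardinal.{0}} (htow : TowersBounded p) {J : Type}
    (hJ : #J ≤ p) (C : J → Set ℕ) :
    ∃ (A : Set ℕ) (k : ℕ → ℕ), A.Infinite ∧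
      ∀ j, (C j).Infinite → ∀ᶠ n in almostAll A, (C j ∩ Icc n (k n)).Nonempty := by
  obtain ⟨A, k, hA, hk⟩ := htow.exists_dominating hJ fun j n => sInf {m ∈ C j | n ≤ m}
  refine ⟨A, k, hA, fun j hj => (hk j).mono fun n hn => ?_⟩
  have hne : {m ∈ C j | n ≤ m}.Nonempty := by
    obtain ⟨m, hm, hnm⟩ := hj.exists_gt n
    exact ⟨m, hm, hnm.le⟩
  have hmem := Nat.sInf_mem hne
  exact ⟨_, hmem.1, hmem.2, hn⟩

theorem Saturated.exists_chains {p : Cardinal.{0}} (hsat : Saturated p) {K : Type}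
    [LinearOrder K] (hKp : #K < p) (A : K → Set ℕ)
    (hA : ∀ i j, i < j → AlmostSubset (A j) (A i)) {A₀ : Set ℕ} (hA₀ : A₀.Infinite) (k : ℕ → ℕ) :
    ∃ (A₁ : Set ℕ) (c : ℕ → Set (Set ℕ)), A₁.Infinite ∧ A₁ ⊆ A₀ ∧
      (∀ n ∈ A₁, (∀ s ∈ c n, s ⊆ Icc n (k n)) ∧ IsChain (· ⊆ ·) (c n)) ∧
      ∀ i, ∀ᶠ n in almostAll A₁, A i ∩ Icc n (k n) ∈ c n := by
  obtain ⟨A₁, c, hA₁, hcS, hc⟩ := hsat.exists_section (Z := Set (Set ℕ)) hKp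
    (fun n => {c | n ∈ A₀ ∧ (∀ s ∈ c, s ⊆ Icc n (k n)) ∧ IsChain (· ⊆ ·) c})
    (fun n => (finite_Icc n (k n)).finite_subsets.finite_subsets.subset fun c hc => hc.2.1)
    (fun i n c => A i ∩ Icc n (k n) ∈ c) (by
      intro T
      have hT : ∀ᶠ n in almostAll A₀, ∀ i ∈ T, ∀ j ∈ T, i < j →
          A j ∩ Icc n (k n) ⊆ A i ∩ Icc n (k n) :=
        (Finset.eventually_all T).2 fun i _ => (Finset.eventually_all T).2 fun j _ => by
          by_cases hij : i < j
          · obtain ⟨m, hm⟩ := exists_forall_ge_of_almostSubset (hA i j hij)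
            filter_upwards [eventually_almostAll_ge A₀ m] with n hn _ x hx
            exact ⟨hm x (hn.trans hx.2.1) hx.1, hx.2⟩
          · exact Eventually.of_forall fun n h => absurd h hij
      refine infinite_of_eventually hA₀ ?_
      filter_upwards [eventually_mem_almostAll A₀, hT] with n hn hnT
      refine ⟨(fun i => A i ∩ Icc n (k n)) '' T, ⟨hn, ?_, ?_⟩, fun i hi => ⟨i, hi, rfl⟩⟩
      · rintro _ ⟨i, _, rfl⟩
        exact inter_subset_right
      · rintro _ ⟨i, hi, rfl⟩ _ ⟨j, hj, rfl⟩ _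
        rcases lt_trichotomy i j with h | rfl | h
        · exact Or.inr (hnT i hi j hj h)
        · exact Or.inl Subset.rfl
        · exact Or.inl (hnT j hj i hi h))
  exact ⟨A₁, c, hA₁, fun n hn => (hcS n hn).1, fun n hn => (hcS n hn).2, hc⟩

/-- If families of size less than `p` are not witnesses for the pseudo-intersection number and
towers of size `p` are bounded, then no downward directed family of size `p` is a witness. -/
theorem exists_pseudoIntersection_of_directed {p : Cardinal.{0}} (hsat : Saturated p)
    (htow : TowersBounded p) {I : Type} [LinearOrder I] [WellFoundedLT I] (hI : #I = p)
    (hIseg : ∀ α : I, #(Iio α) < p) (B : I → Set ℕ) (hB : ∀ α, (B α).Infinite)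
    (hdir : ∀ α β, ∃ γ, B γ ⊆ B α ∩ B β) :
    ∃ A : Set ℕ, A.Infinite ∧ ∀ α, AlmostSubset A (B α) := by
  by_contra hpi
  obtain ⟨𝒜, h𝒜, h𝒜p⟩ := htow.exists_isBadChain hI.le hIseg B hdir hpi
  obtain ⟨κ, hκ, hκ𝒜, A, hbad, hA⟩ := h𝒜.exists_strict hB
  have hκp : κ < p := hκ𝒜.trans_lt h𝒜p
  let K := κ.ord.ToType
  have hK : #K = κ := mk_ord_toType κ
  have hp : ℵ₀ ≤ p := hκ.trans hκp.le
  have hKmax : NoMaxOrder K := Cardinal.noMaxOrder hκ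
  have hKne : Nonempty K := by
    rw [← mk_ne_zero_iff, hK]
    exact (aleph0_pos.trans_le hκ).ne'
  obtain ⟨A₀, k, hA₀, hk⟩ := htow.exists_windows (J := K × K ⊕ K × I)
    (by
      simp only [mk_sum, mk_prod, lift_id, hK, hI]
      exact add_le_of_le hp (mul_le_of_le hp hκp.le hκp.le) (mul_le_of_le hp hκp.le le_rfl))
    (Sum.elim (fun q => A q.1 \ A q.2) fun q => A q.1 ∩ B q.2)
  have hdiff : ∀ i j, i < j → ∀ᶠ n in almostAll A₀, ((A i \ A j) ∩ Icc n (k n)).Nonempty :=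
    fun i j hij => hk (Sum.inl (i, j)) (hA i j hij).2
  have hmeet : ∀ i α, ∀ᶠ n in almostAll A₀, ((A i ∩ B α) ∩ Icc n (k n)).Nonempty :=
    fun i α => hk (Sum.inr (i, α)) (hbad.inter_infinite _ ⟨i, rfl⟩ α)
  obtain ⟨A₁, c, hA₁, hA₁₀, hc, hAc⟩ := hsat.exists_chains (K := K) (hK ▸ hκp) A
    (fun i j hij => (hA i j hij).1) hA₀ k
  have hle := almostAll_mono (almostSubset_of_subset hA₁₀)
  let a : K → ℕ → ℕ := fun i n => (A i ∩ Icc n (k n)).ncard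
  let b : I → ℕ → ℕ := fun α n => sInf {x | (level (c n) x ∩ B α).Nonempty}
  have hlevel : ∀ i, ∀ᶠ n in almostAll A₁, level (c n) (a i n) = A i ∩ Icc n (k n) := by
    intro i
    filter_upwards [eventually_mem_almostAll A₁, hAc i] with n hn hn'
    exact level_ncard (hc n hn).2 (fun s hs => (finite_Icc _ _).subset ((hc n hn).1 s hs)) hn'
  have hlevelB : ∀ i α, ∀ᶠ n in almostAll A₁, (level (c n) (a i n) ∩ B α).Nonempty := by
    intro i α
    filter_upwards [hlevel i, (hmeet i α).filter_mono hle] with n hn hn'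
    obtain ⟨x, hx, hx'⟩ := hn'
    exact ⟨x, hn ▸ ⟨hx.1, hx'⟩, hx.2⟩
  refine not_exists_peculiar_gap hsat htow (K := K) hI hIseg (hK ▸ hκ)
    (fun i => hK.symm ▸ mk_Iio_ord_toType_lt i) (hK ▸ hκp) (fun n => k n + 2) hA₁ a b ?_ ?_ ?_ ?_
  · intro i n
    have h := ncard_le_ncard (inter_subset_right : A i ∩ Icc n (k n) ⊆ _) (finite_Icc n (k n))
    have h' : (Icc n (k n)).ncard = k n + 1 - n := by
      rw [ncard_eq_toFinset_card']
      simp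
    simp only [a]
    omega
  · intro i j hij
    obtain ⟨m, hm⟩ := exists_forall_ge_of_almostSubset (hA i j hij).1
    filter_upwards [eventually_almostAll_ge A₁ m, (hdiff i j hij).filter_mono hle] with n hn hn'
    refine ncard_lt_ncard ?_ ((finite_Icc n (k n)).subset inter_subset_right)
    obtain ⟨x, hx, hx'⟩ := hn'
    refine (ssubset_iff_of_subset fun y hy => ?_).2 ⟨x, ⟨hx.1, hx'⟩, fun h => hx.2 h.1⟩
    exact ⟨hm y (hn.trans hy.2.1) hy.1, hy.2⟩
  · intro α i
    exact (hlevelB i α).mono fun n hn => Nat.sInf_le hn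
  · intro E h hE hEA₁ hEa
    have hEle := almostAll_mono hEA₁
    let D : Set ℕ := ⋃ n ∈ E ∩ A₁, level (c n) (h n)
    have hlevelIcc : ∀ n ∈ A₁, level (c n) (h n) ⊆ Icc n (k n) :=
      fun n hn => sUnion_subset fun s hs => (hc n hn).1 s hs.1
    obtain ⟨α, hα⟩ := hbad.exists_inter_finite D (by
      rintro _ ⟨i, rfl⟩
      have hsub : ∀ᶠ n in almostAll E, level (c n) (h n) ⊆ A i := by
        filter_upwards [hEa i, (hlevel i).filter_mono hEle] with n hn hn'
        exact (level_mono _ hn).trans (hn'.subset.trans inter_subset_left)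
      have hfin : {n ∈ E ∩ A₁ | ¬ level (c n) (h n) ⊆ A i}.Finite :=
        (eventually_almostAll.1 hsub).subset fun n hn => ⟨hn.1.1, hn.2⟩
      refine (hfin.biUnion fun n hn => (finite_Icc n (k n)).subset (hlevelIcc n hn.1.2)).subset ?_
      rintro x ⟨hxD, hxA⟩
      obtain ⟨n, hn, hx⟩ := mem_iUnion₂.1 hxD
      exact mem_biUnion (show n ∈ _ from ⟨hn, fun hs => hxA (hs hx)⟩) hx)
    refine ⟨α, ?_⟩
    obtain ⟨m, hm⟩ := hα.bddAbove
    filter_upwards [eventually_mem_almostAll E, almostSubset_iff.1 hEA₁,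
      eventually_almostAll_ge E (m + 1),
      (hlevelB (Classical.arbitrary K) α).filter_mono hEle] with n hnE hnA₁ hnm hnB
    by_contra! hbh
    obtain ⟨x, hx, hxB⟩ := Nat.sInf_mem (s := {x | (level (c n) x ∩ B α).Nonempty}) ⟨_, hnB⟩
    have hx' := level_mono (c n) hbh hx
    have h₁ := hm ⟨mem_biUnion (show n ∈ E ∩ A₁ from ⟨hnE, hnA₁⟩) hx', hxB⟩
    have h₂ := (hlevelIcc n hnA₁ hx').1
    omega

/-- A witness of least size for the pseudo-intersection number yields an unbounded tower that is
not larger. -/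
theorem not_towersBounded {p : Cardinal.{0}} (hsat : Saturated p) {F : Set (Set ℕ)} (hF : #F = p)
    (hsfip : SFIP F) (hpi : ¬ HasPseudoIntersection F) : ¬ TowersBounded p := by
  classical
  intro htow
  have hFinf : F.Infinite := by
    intro hfin
    refine hpi ⟨_, hsfip hfin.toFinset (by simp), fun B hB => almostSubset_of_subset ?_⟩
    exact sInter_subset_of_mem (by simpa using hB)
  have := hFinf.to_subtype
  obtain ⟨e⟩ := Cardinal.eq.1 ((mk_ord_toType p).trans (hF.symm.trans (mk_finset_of_infinite F).symm))
  let B : p.ord.ToType → Set ℕ := fun α =>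
    ⋂₀ ((e α).map (Function.Embedding.subtype _) : Finset (Set ℕ))
  have hBmem : ∀ α n, n ∈ B α ↔ ∀ C ∈ e α, n ∈ (C : Set ℕ) := by
    intro α n
    simp [B]
  obtain ⟨A, hA, hAB⟩ := exists_pseudoIntersection_of_directed hsat htow (mk_ord_toType p)
    (fun α => mk_Iio_ord_toType_lt α) B
    (fun α => hsfip _ (by
      intro C hC
      obtain ⟨C', -, rfl⟩ := Finset.mem_map.1 (Finset.mem_coe.1 hC)
      exact C'.2))
    (fun α β => ⟨e.symm (e α ∪ e β), fun n hn => by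
      have hn' := (hBmem _ n).1 hn
      simp only [Equiv.apply_symm_apply] at hn'
      exact ⟨(hBmem α n).2 fun C hC => hn' C (Finset.mem_union_left _ hC),
        (hBmem β n).2 fun C hC => hn' C (Finset.mem_union_right _ hC)⟩⟩)
  refine hpi ⟨A, hA, fun C hC => ?_⟩
  refine almostSubset_trans (hAB (e.symm {⟨C, hC⟩})) (almostSubset_of_subset fun n hn => ?_)
  exact (hBmem _ n).1 hn ⟨C, hC⟩ (by simp)

end PseudoIntersection

open PseudoIntersection

/-- Malliaris–Shelah: 𝔭 = 𝔱. -/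
theorem p_eq_t : pseudoIntersectionNumber = towerNumber := by
  let P : Set Cardinal.{0} := {c | ∃ F : Set (Set ℕ), #F = c ∧ (∀ B ∈ F, Set.Infinite B) ∧
    SFIP F ∧ ¬ HasPseudoIntersection F}
  let T : Set Cardinal.{0} := {c | ∃ F : Set (Set ℕ), #F = c ∧ IsTower F ∧
    ¬ HasPseudoIntersection F}
  change sInf P = sInf T
  have hTP : T ⊆ P := by
    rintro c ⟨F, hc, hF, hpi⟩
    exact ⟨F, hc, hF.1, hF.sfip, hpi⟩
  rcases P.eq_empty_or_nonempty with hP | hP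
  · have hT : T = ∅ := Set.subset_empty_iff.1 (hTP.trans hP.subset)
    rw [hP, hT]
  obtain ⟨F, hF, -, hsfip, hpi⟩ := csInf_mem hP
  have hsat : Saturated (sInf P) := by
    intro G hG hlt
    by_contra hGpi
    refine hlt.not_ge (csInf_le' ⟨G, rfl, fun B hB => ?_, hG, hGpi⟩)
    simpa using hG {B} (by simpa using hB)
  have htow := not_towersBounded hsat hF hsfip hpi
  simp only [TowersBounded, not_forall] at htow
  obtain ⟨G, hG, hGle, hGpi⟩ := htow
  have hGT : #G ∈ T := ⟨G, rfl, hG, hGpi⟩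
  exact le_antisymm (le_csInf ⟨_, hGT⟩ fun c hc => csInf_le' (hTP hc)) ((csInf_le' hGT).trans hGle)
end

section
/- The additivity number of the σ-ideal of Lebesgue null sets is at most the additivity number of the σ-ideal of meager sets: add(𝓝) ≤ add(𝓜). -/
open Cardinal MeasureTheory

/-- `add(𝓝)`: the additivity of the σ-ideal of Lebesgue null subsets of ℝ. -/
noncomputable def addNull : Cardinal :=
  sInf { c : Cardinal | ∃ F : Set (Set ℝ), #F = c ∧ (∀ A ∈ F, volume A = 0) ∧
    volume (⋃₀ F) ≠ 0 }

/-- `add(𝓜)`: the additivity of the σ-ideal of meager subsets of ℝ. -/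
noncomputable def addMeager : Cardinal :=
  sInf { c : Cardinal | ∃ F : Set (Set ℝ), #F = c ∧ (∀ A ∈ F, IsMeagre A) ∧
    ¬ IsMeagre (⋃₀ F) }

open Filter Set Topology unitInterval
open scoped ENNReal

/-- Fewer than `add(𝓝)` null sets have a null union. -/
theorem volume_iUnion_eq_zero_of_lt_addNull {ι : Type} (hι : #ι < addNull) {A : ι → Set ℝ}
    (hA : ∀ i, volume (A i) = 0) : volume (⋃ i, A i) = 0 := by
  by_contra h
  refine (mk_range_le.trans_lt hι).not_ge (csInf_le' ⟨range A, rfl, ?_, by rwa [sUnion_range]⟩)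
  rintro _ ⟨i, rfl⟩
  exact hA i

theorem volume_iUnion_unitInterval_eq_zero_of_lt_addNull {ι : Type} (hι : #ι < addNull)
    {A : ι → Set I} (hA : ∀ i, volume (A i) = 0) : volume (⋃ i, A i) = 0 := by
  have key (s : Set I) : volume s = 0 ↔ volume (Subtype.val '' s : Set ℝ) = 0 := by
    rw [Measure.Subtype.volume_def,
      (MeasurableEmbedding.subtype_coe measurableSet_Icc).comap_apply]
  rw [key, image_iUnion]
  exact volume_iUnion_eq_zero_of_lt_addNull hι fun i ↦ (key _).1 (hA i)

theorem exists_independent_sets : ∃ G : ℕ → ℕ → Set I, (∀ n k, MeasurableSet (G n k)) ∧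
    (∀ n k, volume (G n k) ≤ 2⁻¹ ^ n) ∧
    ∀ n (T : Finset ℕ), volume (⋂ k ∈ T, (G n k)ᶜ) ≤ (1 - 2⁻¹ ^ n) ^ T.card := by
  have hp (n : ℕ) : ∃ s : Set I, MeasurableSet s ∧ volume s = 2⁻¹ ^ n := by
    have h1 : (2⁻¹ : ℝ) ^ n ≤ 1 := pow_le_one₀ (by norm_num) (by norm_num)
    refine ⟨Iic ⟨2⁻¹ ^ n, by positivity, h1⟩, measurableSet_Iic, ?_⟩
    rw [unitInterval.volume_Iic, ENNReal.ofReal_pow (by norm_num),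
      ENNReal.ofReal_inv_of_pos (by norm_num)]
    simp
  choose s hs hsv using hp
  obtain ⟨φ, hφ, hmap⟩ := Measure.exists_measurable_map_eq
    (Measure.infinitePi fun _ : ℕ × ℕ ↦ (volume : Measure I))
  refine ⟨fun n k ↦ φ ⁻¹' ((fun x ↦ x (n, k)) ⁻¹' s n), fun n k ↦ ?_, fun n k ↦ ?_,
    fun n T ↦ ?_⟩
  · exact hφ ((measurable_pi_apply _) (hs n))
  · rw [← Measure.map_apply hφ (measurable_pi_apply _ (hs n)), hmap,
      ← Measure.map_apply (measurable_pi_apply (n, k)) (hs n), Measure.infinitePi_map_eval, hsv]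
  · have hT : (⋂ k ∈ T, (φ ⁻¹' ((fun x ↦ x (n, k)) ⁻¹' s n))ᶜ)
        = φ ⁻¹' (Set.pi (T.map ⟨Prod.mk n, Prod.mk_right_injective n⟩ : Finset (ℕ × ℕ))
          fun _ ↦ (s n)ᶜ) := by
      ext x
      simp [Set.mem_pi]
    rw [hT, ← Measure.map_apply hφ, hmap, Measure.infinitePi_pi]
    · simp [prob_compl_eq_one_sub (hs n), hsv]
    · exact fun _ _ ↦ (hs n).compl
    · exact MeasurableSet.pi (Finset.countable_toSet _) fun _ _ ↦ (hs n).compl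

/-- Inside a set of positive measure one finds a compact set of positive measure in which
countably many prescribed measurable sets are relatively closed. -/
theorem exists_isCompact_forall_isClosed_inter {X κ : Type*} [TopologicalSpace X] [CompactSpace X]
    [MeasurableSpace X] [BorelSpace X] [T2Space X] [Countable κ] (μ : Measure X)
    [IsFiniteMeasure μ] [μ.Regular] {B : Set X} (hB : MeasurableSet B) (hB0 : μ B ≠ 0)
    {G : κ → Set X} (hG : ∀ j, MeasurableSet (G j)) :
    ∃ K ⊆ B, IsCompact K ∧ μ K ≠ 0 ∧ ∀ j, IsClosed (K ∩ G j) := by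
  obtain ⟨ε, hε, hsum⟩ := ENNReal.exists_pos_sum_of_countable' hB0 κ
  have hO (j : κ) : ∃ F O, F ⊆ G j ∧ IsClosed F ∧ IsOpen O ∧ G j \ F ⊆ O ∧ μ O < ε j := by
    obtain ⟨F, hFG, hF, hFμ⟩ := (hG j).exists_isClosed_sdiff_lt (measure_ne_top μ _) (hε j).ne'
    obtain ⟨O, hO, hOo, hOμ⟩ := (G j \ F).exists_isOpen_lt_of_lt _ hFμ
    exact ⟨F, O, hFG, hF, hOo, hO, hOμ⟩
  choose F O hFG hF hO hFO hOμ using hO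
  have hpos : μ (B \ ⋃ j, O j) ≠ 0 := by
    intro h0
    have : μ B ≤ μ (⋃ j, O j) := by
      calc μ B ≤ μ ((B \ ⋃ j, O j) ∪ ⋃ j, O j) := measure_mono (by simp)
        _ ≤ _ := (measure_union_le _ _).trans (by simp [h0])
    refine (this.trans ((measure_iUnion_le _).trans ?_)).not_gt hsum
    exact ENNReal.tsum_le_tsum fun j ↦ (hOμ j).le
  obtain ⟨K, hKB, hK, hKμ⟩ := (hB.diff (.iUnion fun j ↦ (hO j).measurableSet)
    ).exists_lt_isCompact_of_ne_top (measure_ne_top μ _) (pos_iff_ne_zero.2 hpos)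
  refine ⟨K, hKB.trans sdiff_subset, hK, hKμ.ne', fun j ↦ ?_⟩
  have : K ∩ G j = K ∩ F j := by
    ext x
    refine ⟨fun ⟨hx, hxG⟩ ↦ ⟨hx, ?_⟩, fun ⟨hx, hxF⟩ ↦ ⟨hx, hFG j hxF⟩⟩
    by_contra hxF
    exact (hKB hx).2 (mem_iUnion.2 ⟨j, hFO j ⟨hxG, hxF⟩⟩)
  rw [this]
  exact hK.isClosed.inter (hF j)

/-- If a compact set `K` misses `limsup G n (f n)`, then some finite intersection `C` of the sets
`G n k` has positive measure in `K` while `C ∩ G n (f n)` is null in `K` for almost all `n`. -/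
theorem exists_finset_eventually_measure_inter_eq_zero {X : Type*} [TopologicalSpace X]
    [T2Space X] [MeasurableSpace X] (μ : Measure X) {K : Set X} (hK : IsCompact K)
    (hK0 : μ K ≠ 0) {G : ℕ × ℕ → Set X} (hG : ∀ p, IsClosed (K ∩ G p)) (f : ℕ → ℕ)
    (hf : ∀ x ∈ K, ¬ ∃ᶠ n in atTop, x ∈ G (n, f n)) :
    ∃ P : Finset (ℕ × ℕ), μ (K ∩ ⋂ p ∈ P, G p) ≠ 0 ∧
      ∀ᶠ n in atTop, μ ((K ∩ ⋂ p ∈ P, G p) ∩ G (n, f n)) = 0 := by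
  by_contra! hcon
  have hstep (P : {P : Finset (ℕ × ℕ) // μ (K ∩ ⋂ p ∈ P, G p) ≠ 0}) (m : ℕ) :
      ∃ Q : {P : Finset (ℕ × ℕ) // μ (K ∩ ⋂ p ∈ P, G p) ≠ 0}, P.1 ⊆ Q.1 ∧
        ∃ n ≥ m, (n, f n) ∈ Q.1 := by
    obtain ⟨n, hn, hne⟩ := frequently_atTop.1 (hcon P.1 P.2) m
    refine ⟨⟨insert (n, f n) P.1, ?_⟩, Finset.subset_insert _ _, n, hn,
      Finset.mem_insert_self _ _⟩
    rwa [Finset.set_biInter_insert, inter_comm (G _), ← inter_assoc]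
  choose next hsub hmem using hstep
  let Q : ℕ → {P : Finset (ℕ × ℕ) // μ (K ∩ ⋂ p ∈ P, G p) ≠ 0} :=
    fun r ↦ Nat.rec ⟨∅, by simpa using hK0⟩ (fun m P ↦ next P m) r
  have hclosed (P : Finset (ℕ × ℕ)) : IsClosed (K ∩ ⋂ p ∈ P, G p) := by
    have : K ∩ ⋂ p ∈ P, G p = K ∩ ⋂ p ∈ P, (K ∩ G p) := by
      ext x
      simp +contextual
    rw [this]
    exact hK.isClosed.inter (isClosed_biInter fun p _ ↦ hG p)
  obtain ⟨x, hx⟩ := IsCompact.nonempty_iInter_of_sequence_nonempty_isCompact_isClosed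
    (fun r ↦ K ∩ ⋂ p ∈ (Q r).1, G p)
    (fun r ↦ inter_subset_inter_right _ (biInter_subset_biInter_left (hsub (Q r) r)))
    (fun r ↦ nonempty_of_measure_ne_zero (Q r).2)
    (hK.of_isClosed_subset (hclosed _) inter_subset_left) (fun r ↦ hclosed _)
  rw [mem_iInter] at hx
  refine hf x (hx 0).1 (frequently_atTop.2 fun m ↦ ?_)
  obtain ⟨n, hn, hnQ⟩ := hmem (Q m) m
  exact ⟨n, hn, mem_iInter₂.1 (hx (m + 1)).2 _ hnQ⟩

theorem tendsto_one_sub_inv_two_pow_pow_four_pow :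
    Tendsto (fun n : ℕ ↦ (1 - 2⁻¹ ^ n : ℝ≥0∞) ^ 4 ^ n) atTop (𝓝 0) := by
  have hexp : Tendsto (fun n : ℕ ↦ ENNReal.ofReal (Real.exp (-2 ^ n))) atTop (𝓝 0) := by
    rw [← ENNReal.ofReal_zero]
    exact ENNReal.tendsto_ofReal (Real.tendsto_exp_neg_atTop_nhds_zero.comp
      (tendsto_pow_atTop_atTop_of_one_lt one_lt_two))
  refine tendsto_of_tendsto_of_tendsto_of_le_of_le tendsto_const_nhds hexp
    (fun _ ↦ zero_le) fun n ↦ ?_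
  have h1 : (2⁻¹ : ℝ) ^ n ≤ 1 := pow_le_one₀ (by norm_num) (by norm_num)
  have hreal : (1 - 2⁻¹ ^ n : ℝ≥0∞) = ENNReal.ofReal (1 - 2⁻¹ ^ n) := by
    rw [ENNReal.ofReal_sub _ (by positivity), ENNReal.ofReal_pow (by norm_num),
      ENNReal.ofReal_inv_of_pos (by norm_num)]
    simp
  simp only [hreal]
  rw [← ENNReal.ofReal_pow (by linarith)]
  refine ENNReal.ofReal_le_ofReal ?_
  calc (1 - 2⁻¹ ^ n : ℝ) ^ 4 ^ n ≤ Real.exp (-2⁻¹ ^ n) ^ 4 ^ n :=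
        pow_le_pow_left₀ (by linarith) (Real.one_sub_le_exp_neg _) _
    _ = Real.exp (-2 ^ n) := by
        rw [← Real.exp_nat_mul]
        congr 1
        push_cast
        rw [mul_neg, ← mul_pow]
        norm_num

/-- Fewer than `add(𝓝)` functions are localized by a single slalom. -/
theorem exists_slalom_of_lt_addNull {ι : Type} (hι : #ι < addNull) (f : ι → ℕ → ℕ) :
    ∃ S : ℕ → Finset ℕ, (∀ n, (S n).card ≤ (n + 1) * 4 ^ n) ∧
      ∀ i, ∀ᶠ n in atTop, f i n ∈ S n := by
  classical
  obtain ⟨G, hGm, hGμ, hGind⟩ := exists_independent_sets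
  let H (i : ι) : Set I := {x | ∃ᶠ n in atTop, x ∈ G n (f i n)}
  have hH (i : ι) : volume (H i) = 0 := by
    refine measure_setOfPred_frequently_eq_zero (p := fun n x ↦ x ∈ G n (f i n)) (ne_top_of_le_ne_top ?_
      (ENNReal.tsum_le_tsum fun n ↦ hGμ n (f i n)))
    rw [ENNReal.tsum_geometric]
    simp
  have hU := volume_iUnion_unitInterval_eq_zero_of_lt_addNull hι hH
  have hB0 : volume (toMeasurable volume (⋃ i, H i))ᶜ ≠ 0 := by
    rw [prob_compl_eq_one_sub (measurableSet_toMeasurable _ _), measure_toMeasurable, hU]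
    simp
  obtain ⟨K, hKB, hK, hK0, hKG⟩ := exists_isCompact_forall_isClosed_inter volume
    (measurableSet_toMeasurable _ _).compl hB0 (G := fun p : ℕ × ℕ ↦ G p.1 p.2)
    fun p ↦ hGm p.1 p.2
  let C (P : Finset (ℕ × ℕ)) : Set I := K ∩ ⋂ p ∈ P, G p.1 p.2
  let T (P : Finset (ℕ × ℕ)) (n : ℕ) : Set ℕ := {k | volume (C P ∩ G n k) = 0}
  have hT (P : Finset (ℕ × ℕ)) (hP : volume (C P) ≠ 0) :
      ∀ᶠ n in atTop, (T P n).encard ≤ (4 ^ n : ℕ) := by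
    filter_upwards [tendsto_one_sub_inv_two_pow_pow_four_pow.eventually_lt_const
      (pos_iff_ne_zero.2 hP)] with n hn
    by_contra! hlt
    obtain ⟨t, htT, ht⟩ := Set.exists_subset_encard_eq hlt.le
    have htfin : t.Finite := finite_of_encard_eq_coe ht
    lift t to Finset ℕ using htfin
    rw [encard_coe_eq_coe_finsetCard, Nat.cast_inj] at ht
    refine hn.not_ge ?_
    calc volume (C P)
        ≤ volume ((⋂ k ∈ t, (G n k)ᶜ) ∪ ⋃ k ∈ t, (C P ∩ G n k)) := by
          refine measure_mono fun x hx ↦ ?_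
          by_cases h : ∃ k ∈ t, x ∈ G n k
          · obtain ⟨k, hk, hxk⟩ := h
            exact Or.inr (mem_iUnion₂.2 ⟨k, hk, hx, hxk⟩)
          · push Not at h
            exact Or.inl (mem_iInter₂.2 h)
      _ ≤ volume (⋂ k ∈ t, (G n k)ᶜ) + volume (⋃ k ∈ t, (C P ∩ G n k)) := measure_union_le _ _
      _ = volume (⋂ k ∈ t, (G n k)ᶜ) := by
          have h0 : volume (⋃ k ∈ t, (C P ∩ G n k)) = 0 :=
            (measure_biUnion_null_iff t.countable_toSet).2 fun k hk ↦ htT hk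
          rw [h0, add_zero]
      _ ≤ (1 - 2⁻¹ ^ n) ^ 4 ^ n := ht ▸ hGind n t
  have hR (P : Finset (ℕ × ℕ)) (n : ℕ) : ∃ R : Finset ℕ, R.card ≤ 4 ^ n ∧
      ((T P n).encard ≤ (4 ^ n : ℕ) → T P n ⊆ R) := by
    by_cases h : (T P n).encard ≤ (4 ^ n : ℕ)
    · obtain ⟨R, hR⟩ := (finite_of_encard_le_coe h).exists_finset_coe
      rw [← hR] at h ⊢
      exact ⟨R, by rwa [encard_coe_eq_coe_finsetCard, Nat.cast_le] at h, fun _ ↦ subset_rfl⟩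
    · exact ⟨∅, by simp, fun h' ↦ (h h').elim⟩
  choose R hRcard hRT using hR
  obtain ⟨enum, henum⟩ := exists_surjective_nat (Finset (ℕ × ℕ))
  refine ⟨fun n ↦ (Finset.range (n + 1)).biUnion fun j ↦ R (enum j) n, fun n ↦ ?_, fun i ↦ ?_⟩
  · simpa using Finset.card_biUnion_le_card_mul (Finset.range (n + 1)) _ _
      fun j _ ↦ hRcard (enum j) n
  · obtain ⟨P, hP0, hP⟩ := exists_finset_eventually_measure_inter_eq_zero volume hK hK0 hKG (f i)
      fun x hx hxf ↦ hKB hx (subset_toMeasurable _ _ (mem_iUnion.2 ⟨i, hxf⟩))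
    obtain ⟨j, rfl⟩ := henum P
    filter_upwards [hP, hT _ hP0, eventually_ge_atTop j] with n hn hTn hjn
    exact Finset.mem_biUnion.2 ⟨j, by simpa [Nat.lt_succ_iff] using hjn, hRT _ n hTn hn⟩

/-- Version of `exists_slalom_of_lt_addNull` for functions with values in countable types. -/
theorem exists_slalom_pi_of_lt_addNull {ι : Type} (hι : #ι < addNull) {β : ℕ → Type*}
    [∀ n, Countable (β n)] (f : ι → ∀ n, β n) :
    ∃ S : ∀ n, Finset (β n), (∀ n, (S n).card ≤ (n + 1) * 4 ^ n) ∧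
      ∀ i, ∀ᶠ n in atTop, f i n ∈ S n := by
  classical
  choose φ hφ using fun n ↦ Countable.exists_injective_nat (β n)
  obtain ⟨S, hScard, hS⟩ := exists_slalom_of_lt_addNull hι fun i n ↦ φ n (f i n)
  refine ⟨fun n ↦ (S n).preimage (φ n) (hφ n).injOn, fun n ↦ ?_, fun i ↦ ?_⟩
  · refine le_trans ?_ (hScard n)
    rw [Finset.card_preimage]
    exact Finset.card_filter_le _ _
  · filter_upwards [hS i] with n hn
    simpa using hn

/-- Following finitely many refinement strategies `c ∈ L` one after the other, starting from
`U j`, leads to a set `U m` contained in some response of every legal strategy in the list. -/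
theorem exists_common_refinement {X : Type*} (U : ℕ → Set X) (s D : ℕ → Finset ℕ)
    (hD : Monotone D) (hsD : ∀ r, ∀ l ∈ D r, s l ⊆ D (r + 1)) (L : List (ℕ → ℕ)) (r : ℕ) (j : ℕ)
    (hj : j ∈ D r) :
    ∃ m, U m ⊆ U j ∧ ∀ c ∈ L, (∀ l ∈ D (r + L.length), c l ∈ s l ∧ U (c l) ⊆ U l) →
      ∃ l ∈ D (r + L.length), U m ⊆ U (c l) := by
  induction L generalizing r j with
  | nil => exact ⟨j, subset_rfl, by simp⟩
  | cons c L ih =>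
    have hlen : r + (c :: L).length = r + 1 + L.length := by simp; omega
    have hjD : j ∈ D (r + (c :: L).length) := hD (by omega) hj
    rw [hlen] at hjD ⊢
    by_cases h : c j ∈ s j ∧ U (c j) ⊆ U j
    · obtain ⟨m, hm, hmL⟩ := ih (r + 1) (c j) (hsD r j hj h.1)
      refine ⟨m, hm.trans h.2, fun c' hc' hgood ↦ ?_⟩
      rcases List.mem_cons.1 hc' with rfl | hc'
      · exact ⟨j, hjD, hm⟩
      · exact hmL c' hc' hgood
    · obtain ⟨m, hm, hmL⟩ := ih (r + 1) j (hD (by omega) hj)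
      refine ⟨m, hm, fun c' hc' hgood ↦ ?_⟩
      rcases List.mem_cons.1 hc' with rfl | hc'
      · exact (h (hgood j hjD)).elim
      · exact hmL c' hc' hgood

/-- The complement of a meagre set contains the intersection of a decreasing sequence of dense
open sets. -/
theorem IsMeagre.exists_antitone_dense_open {X : Type*} [TopologicalSpace X] {A : Set X}
    (hA : IsMeagre A) : ∃ O : ℕ → Set X, Antitone O ∧ (∀ n, IsOpen (O n)) ∧ (∀ n, Dense (O n)) ∧
      ⋂ n, O n ⊆ Aᶜ := by
  obtain ⟨S, hSo, hSd, hSc, hSA⟩ := mem_residual_iff.1 hA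
  obtain ⟨g, hg⟩ := (hSc.insert Set.univ).exists_eq_range (insert_nonempty _ _)
  have hgS (n : ℕ) : IsOpen (g n) ∧ Dense (g n) := by
    rcases (hg ▸ mem_range_self n : g n ∈ insert Set.univ S) with h | h
    · rw [h]; exact ⟨isOpen_univ, dense_univ⟩
    · exact ⟨hSo _ h, hSd _ h⟩
  have hfin (n : ℕ) : IsOpen (⋂ k ∈ Finset.range n, g k) ∧ Dense (⋂ k ∈ Finset.range n, g k) := by
    induction n with
    | zero => simp
    | succ n ih =>
      rw [Finset.range_add_one, Finset.set_biInter_insert]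
      exact ⟨(hgS n).1.inter ih.1, (hgS n).2.inter_of_isOpen_left ih.2 (hgS n).1⟩
  refine ⟨fun n ↦ ⋂ k ∈ Finset.range n, g k, fun a b hab ↦ ?_, fun n ↦ (hfin n).1,
    fun n ↦ (hfin n).2, fun x hx ↦ hSA fun t ht ↦ ?_⟩
  · exact biInter_subset_biInter_left fun k hk ↦ Finset.range_mono hab hk
  · obtain ⟨n, rfl⟩ : t ∈ range g := hg ▸ mem_insert_of_mem _ ht
    exact mem_iInter₂.1 (mem_iInter.1 hx (n + 1)) n (Finset.self_mem_range_succ n)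

theorem isMeagre_iUnion_of_lt_addNull {X : Type*} [TopologicalSpace X]
    [SecondCountableTopology X] [Nonempty X] {ι : Type} (hι : #ι < addNull) {A : ι → Set X}
    (hA : ∀ i, IsMeagre (A i)) : IsMeagre (⋃ i, A i) := by
  classical
  obtain ⟨b, hbc, hbe, hb⟩ := TopologicalSpace.exists_countable_basis X
  have hbne : b.Nonempty := by
    obtain ⟨u, hu, -⟩ := hb.exists_subset_of_mem_open (mem_univ (Classical.arbitrary X)) isOpen_univ
    exact ⟨u, hu⟩
  obtain ⟨U, rfl⟩ := hbc.exists_eq_range hbne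
  have hUo (j : ℕ) : IsOpen (U j) := hb.isOpen (mem_range_self j)
  have hUne (j : ℕ) : (U j).Nonempty :=
    nonempty_iff_ne_empty.2 fun h ↦ hbe (h ▸ mem_range_self j)
  choose O hOanti hOo hOd hOA using fun i ↦ (hA i).exists_antitone_dense_open
  have hh (i : ι) (n j : ℕ) : ∃ m, U m ⊆ U j ∧ U m ⊆ O i n := by
    obtain ⟨x, hx⟩ := (hOd i n).inter_open_nonempty _ (hUo j) (hUne j)
    obtain ⟨_, ⟨m, rfl⟩, -, hm⟩ := hb.exists_subset_of_mem_open hx ((hUo j).inter (hOo i n))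
    exact ⟨m, subset_inter_iff.1 hm⟩
  choose h hhU hhO using hh
  obtain ⟨s, -, hs⟩ := exists_slalom_of_lt_addNull hι fun i e ↦ h i e.unpair.1 e.unpair.2
  -- `D e r` contains every index that `r` responses allowed by `s` can lead to.
  let D (e : ℕ) : ℕ → Finset ℕ := fun r ↦ Nat.rec (motive := fun _ ↦ Finset ℕ)
    {e.unpair.2} (fun _ E ↦ E ∪ E.biUnion fun l ↦ s (Nat.pair e.unpair.1 l)) r
  have hDmono (e : ℕ) : Monotone (D e) := monotone_nat_of_le_succ fun r ↦ Finset.subset_union_left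
  have hsD (e r l : ℕ) (hl : l ∈ D e r) : s (Nat.pair e.unpair.1 l) ⊆ D e (r + 1) :=
    (Finset.subset_biUnion_of_mem (fun l ↦ s (Nat.pair e.unpair.1 l)) hl).trans
      Finset.subset_union_right
  let N (e : ℕ) : ℕ := (e + 1) * 4 ^ e
  obtain ⟨S, hScard, hS⟩ := exists_slalom_pi_of_lt_addNull hι
    fun i e (l : D e (N e)) ↦ h i e.unpair.1 l
  let extend (e : ℕ) (c : D e (N e) → ℕ) (l : ℕ) : ℕ := if hl : l ∈ D e (N e) then c ⟨l, hl⟩ else 0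
  choose m hmU hm using fun e ↦ exists_common_refinement U (fun l ↦ s (Nat.pair e.unpair.1 l)) (D e)
    (hDmono e) (hsD e) ((S e).toList.map (extend e)) 0 e.unpair.2 (Finset.mem_singleton_self _)
  let Q (M : ℕ) : Set X := ⋃ e ∈ {e : ℕ | M ≤ e.unpair.1}, U (m e)
  have hQo (M : ℕ) : IsOpen (Q M) := isOpen_biUnion fun e _ ↦ hUo _
  have hQd (M : ℕ) : Dense (Q M) := by
    refine hb.dense_iff.2 ?_
    rintro _ ⟨j, rfl⟩ -
    obtain ⟨x, hx⟩ := hUne (m (Nat.pair M j))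
    refine ⟨x, by simpa using hmU _ hx, mem_iUnion₂.2 ⟨Nat.pair M j, ?_, hx⟩⟩
    simp
  refine mem_of_superset (countable_iInter_mem.2 fun M ↦ residual_of_dense_open (hQo M) (hQd M))
    fun x hx ↦ ?_
  rw [mem_compl_iff, mem_iUnion, not_exists]
  intro i
  refine hOA i (mem_iInter.2 fun k ↦ ?_)
  obtain ⟨e₁, he₁⟩ := eventually_atTop.1 (hs i)
  obtain ⟨e₂, he₂⟩ := eventually_atTop.1 (hS i)
  obtain ⟨e, he, hxe⟩ := mem_iUnion₂.1 (mem_iInter.1 hx (max k (max e₁ e₂)))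
  simp only [mem_ofPred_eq, max_le_iff] at he
  have hlen : 0 + ((S e).toList.map (extend e)).length ≤ N e := by simpa using hScard e
  have hext (l : ℕ) (hl : l ∈ D e (0 + ((S e).toList.map (extend e)).length)) :
      extend e (fun l ↦ h i e.unpair.1 l) l = h i e.unpair.1 l :=
    dif_pos (hDmono e hlen hl)
  obtain ⟨l, hl, hml⟩ := hm e (extend e fun l ↦ h i e.unpair.1 l)
    (List.mem_map_of_mem (Finset.mem_toList.2 (he₂ e (he.2.2.trans e.unpair_left_le))))
    fun l hl ↦ by
      rw [hext l hl]
      refine ⟨?_, hhU i _ l⟩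
      simpa using he₁ (Nat.pair e.unpair.1 l) (he.2.1.trans (Nat.left_le_pair _ _))
  rw [hext l hl] at hml
  exact hOanti i he.1 (hhO i _ l (hml hxe))

/-- Bartoszyński's theorem: `add(𝓝) ≤ add(𝓜)`. -/
theorem addNull_le_addMeager : addNull ≤ addMeager := by
  refine le_csInf ?_ ?_
  · refine ⟨_, range (singleton : ℝ → Set ℝ), rfl, ?_, ?_⟩
    · rintro _ ⟨x, rfl⟩
      exact (IsClosed.isNowhereDense_iff isClosed_singleton).2 (interior_singleton x) |>.isMeagre
    · rw [sUnion_range, iUnion_of_singleton]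
      exact not_isMeagre_of_isOpen isOpen_univ univ_nonempty
  · rintro _ ⟨F, rfl, hF, hFU⟩
    by_contra! hlt
    rw [sUnion_eq_iUnion] at hFU
    exact hFU (isMeagre_iUnion_of_lt_addNull hlt fun A ↦ hF A A.2)
end
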